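/- arXiv:math/0612049 — 2 statements merged into one kernel-verified Lean document; each statement's English description precedes it below -/
import Mathlib

section
/- Let f ∈ 𝒪(ℂ²,0,0) and let 𝔐_f = {m ∈ ℕ : the linear part of f at 0 (the linear map x ↦ Df(0)x) has a periodic point of exact period m}. Then: (i) for each m ∈ ℕ \ 𝔐_f such that 0 is an isolated fixed point of f^m, P_m(f,0) = 0; (ii) for each positive integer M such that 0 is an isolated fixed point of f^M, μ_{f^M}(0) = Σ_{m ∈ 𝔐_f, m|M} P_m(f,0). -/
open Metric Set Filter Topology Polynomial Asymptotics
open scoped Classical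

noncomputable section

namespace ZhangPaper

/-- `ℂⁿ`. -/
abbrev Cn (n : ℕ) := Fin n → ℂ

variable {n : ℕ}

/-- A germ in `𝒪(ℂⁿ,0,0)`: holomorphic near `0` and fixing the origin. -/
def IsGerm (f : Cn n → Cn n) : Prop := AnalyticAt ℂ f 0 ∧ f 0 = 0

/-- `q` is a regular value of `h` on `s`. -/
def IsRegularValueOn (h : Cn n → Cn n) (s : Set (Cn n)) (q : Cn n) : Prop :=
  ∀ x ∈ s, h x = q → Function.Bijective (fderiv ℂ h x)

/-- `m` is the zero order (multiplicity) of `h` at the isolated zero `p`: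
the number of solutions of `h x = q` near `p`, for any regular value `q`
with `‖q‖` sufficiently small. -/
def HasZeroOrder (h : Cn n → Cn n) (p : Cn n) (m : ℕ) : Prop :=
  ∃ r > 0, AnalyticOnNhd ℂ h (closedBall p r) ∧ h p = 0 ∧
    (∀ x ∈ closedBall p r, h x = 0 → x = p) ∧
    (∀ ε > 0, ∃ q : Cn n, ‖q‖ < ε ∧ IsRegularValueOn h (ball p r) q) ∧
    ∃ δ > 0, ∀ q : Cn n, ‖q‖ < δ → IsRegularValueOn h (ball p r) q →
      {x ∈ ball p r | h x = q}.ncard = m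

/-- The zero order `π_h(p)` of `h` at `p`. -/
def zeroOrder (h : Cn n → Cn n) (p : Cn n) : ℕ := sInf {m | HasZeroOrder h p m}

/-- The fixed point index `μ_g(p)` of `g` at `p`. -/
def fixedPointIndex (g : Cn n → Cn n) (p : Cn n) : ℕ :=
  zeroOrder (fun x => x - g x) p

/-- The local Dold index `P_M(f,0)`. -/
def doldIndex (f : Cn n → Cn n) (M : ℕ) : ℤ :=
  ∑ τ ∈ M.primeFactors.powerset,
    (-1 : ℤ) ^ τ.card * (fixedPointIndex (f^[M / (∏ p ∈ τ, p)]) 0 : ℤ)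

/-- `x` is a periodic point of exact period `M` for `g`. -/
def ExactPeriodicPt (g : Cn n → Cn n) (M : ℕ) (x : Cn n) : Prop :=
  g^[M] x = x ∧ ∀ j, 0 < j → j < M → g^[j] x ≠ x

/-- `g` has at least `m` distinct periodic orbits of period `M` inside `B`. -/
def AtLeastOrbits (g : Cn n → Cn n) (M m : ℕ) (B : Set (Cn n)) : Prop :=
  ∃ p : Fin m → Cn n,
    (∀ i, ExactPeriodicPt g M (p i) ∧ ∀ j < M, g^[j] (p i) ∈ B) ∧
    ∀ i j : Fin m, i ≠ j → ∀ l < M, g^[l] (p i) ≠ p j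

/-- `g` has exactly `m` distinct periodic orbits of period `M` inside `B`. -/
def ExactlyOrbits (g : Cn n → Cn n) (M m : ℕ) (B : Set (Cn n)) : Prop :=
  AtLeastOrbits g M m B ∧ ¬ AtLeastOrbits g M (m + 1) B

/-- The number `𝒪_M(f,0)` of periodic orbits of period `M` of `f` hidden at the
fixed point `0`: the largest `m` such that there is a ball `B` centered at `0` in which
`0` is the only fixed point of `f^M`, and a sequence of holomorphic maps fixing `0`
converging to `f` uniformly on `B`, each having `m` distinct periodic orbits of
period `M` in `B`. -/
def hiddenOrbits (f : Cn n → Cn n) (M : ℕ) : ℕ :=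
  sSup {m | ∃ r > 0,
    (∀ x ∈ closedBall (0 : Cn n) r, f^[M] x = x → x = 0) ∧
    ∃ fk : ℕ → Cn n → Cn n,
      (∀ k, AnalyticOnNhd ℂ (fk k) (ball (0 : Cn n) r) ∧ fk k 0 = 0) ∧
      TendstoUniformlyOn fk f atTop (ball (0 : Cn n) r) ∧
      ∀ k, AtLeastOrbits (fk k) M m (ball (0 : Cn n) r)}

/-- `0` is an isolated fixed point of `g`. -/
def IsolatedFixedPtAt0 (g : Cn n → Cn n) : Prop :=
  g 0 = 0 ∧ ∀ᶠ x in 𝓝[≠] (0 : Cn n), g x ≠ x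

/-- `0` is an isolated zero of `h`. -/
def IsolatedZeroAt0 (h : Cn n → Cn n) : Prop :=
  h 0 = 0 ∧ ∀ᶠ x in 𝓝[≠] (0 : Cn n), h x ≠ 0

/-- `p` is a simple fixed point of `g`: `Dg(p)` has no eigenvalue `1`. -/
def SimpleFixedPt (g : Cn n → Cn n) (p : Cn n) : Prop :=
  g p = p ∧ ¬ Module.End.HasEigenvalue ((fderiv ℂ g p).toLinearMap) 1

/-- The global fixed point index `L(g)` of `g` over `U`: the sum of the fixed point
indices at all fixed points of `g` in `U`. -/
def globalIndex (g : Cn n → Cn n) (U : Set (Cn n)) : ℤ :=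
  ∑ᶠ p ∈ {x ∈ U | g x = x}, (fixedPointIndex g p : ℤ)

/-- The global Dold index `P_M(f)` over `U`. -/
def globalDold (f : Cn n → Cn n) (M : ℕ) (U : Set (Cn n)) : ℤ :=
  ∑ τ ∈ M.primeFactors.powerset,
    (-1 : ℤ) ^ τ.card * globalIndex (f^[M / (∏ p ∈ τ, p)]) U

open MeasureTheory in
lemma ibp_aux {r r' : ℝ} (hr : r' < r) (G : Cn 2 → ℂ)
    (hG : ContDiffOn ℝ 1 G (ball 0 r)) (h0 : ∀ x ∈ ball (0 : Cn 2) r, r' < ‖x‖ → G x = 0) (v : Cn 2) :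
    ∫ x in closedBall (0 : Cn 2) r', fderiv ℝ G x v = 0 := by
  set g : Cn 2 → ℂ := (ball (0 : Cn 2) r).indicator G with hg
  have hsub : closedBall (0 : Cn 2) r' ⊆ ball 0 r := closedBall_subset_ball hr
  have hg0 : ∀ x, x ∉ closedBall (0 : Cn 2) r' → g x = 0 := by
    intro x hx
    by_cases h : x ∈ ball (0 : Cn 2) r
    · rw [hg, indicator_of_mem h]; exact h0 x h (by simpa using hx)
    · rw [hg, indicator_of_notMem h]
  have hev : ∀ x ∈ ball (0 : Cn 2) r, g =ᶠ[𝓝 x] G := by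
    intro x hx
    filter_upwards [isOpen_ball.mem_nhds hx] with y hy
    rw [hg, indicator_of_mem hy]
  have hev0 : ∀ x, x ∉ closedBall (0 : Cn 2) r' → g =ᶠ[𝓝 x] fun _ => 0 := by
    intro x hx
    filter_upwards [isClosed_closedBall.isOpen_compl.mem_nhds hx] with y hy
    exact hg0 y hy
  have hcd : ContDiff ℝ 1 g := by
    rw [contDiff_iff_contDiffAt]
    intro x
    by_cases h : x ∈ ball (0 : Cn 2) r
    · exact (hG.contDiffAt (isOpen_ball.mem_nhds h)).congr_of_eventuallyEq (hev x h)
    · exact (contDiffAt_const (c := (0:ℂ))).congr_of_eventuallyEq (hev0 x fun h' => h (hsub h'))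
  have hcs : HasCompactSupport g :=
    HasCompactSupport.intro (isCompact_closedBall (0 : Cn 2) r') hg0
  have hint : ∫ x, fderiv ℝ g x v = 0 := by
    have := integral_mul_fderiv_eq_neg_fderiv_mul_of_integrable (μ := volume) (𝕜 := ℂ)
      (f := fun _ : Cn 2 => (1 : ℂ)) (g := g) (v := v) (by simp) ?_ ?_ (by simp) ?_
    · simpa using this
    · simp only [one_mul]
      refine Continuous.integrable_of_hasCompactSupport ?_ ?_
      · exact (hcd.continuous_fderiv (by simp)).clm_apply continuous_const
      · exact hcs.fderiv_apply ℝ v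
    · simp only [one_mul]
      exact hcd.continuous.integrable_of_hasCompactSupport hcs
    · intro x _; exact (hcd.differentiable (by simp)).differentiableAt
  have h1 : ∫ x in closedBall (0 : Cn 2) r', fderiv ℝ g x v = ∫ x, fderiv ℝ g x v := by
    apply setIntegral_eq_integral_of_forall_compl_eq_zero
    intro x hx
    rw [(hev0 x hx).fderiv_eq]; simp
  rw [← hint, ← h1]
  refine setIntegral_congr_fun measurableSet_closedBall ?_
  intro x hx
  simp only
  rw [(hev x (hsub hx)).fderiv_eq]

/-- complexified linear functional -/
lemma clin_aux (l : Cn 2 →L[ℝ] ℝ) (v : Cn 2) :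
    ((l v : ℂ) - Complex.I * (l (Complex.I • v) : ℂ)) =
      v 0 * ((l (Pi.single 0 1) : ℂ) - Complex.I * (l (Complex.I • Pi.single 0 1) : ℂ)) +
      v 1 * ((l (Pi.single 1 1) : ℂ) - Complex.I * (l (Complex.I • Pi.single 1 1) : ℂ)) := by
  have key : ∀ (z : ℂ) (e : Cn 2), l (z • e) = z.re * l e + z.im * l (Complex.I • e) := by
    intro z e
    have : z • e = (z.re : ℝ) • e + (z.im : ℝ) • (Complex.I • e) := by
      ext i
      simp only [Pi.smul_apply, Pi.add_apply, smul_eq_mul, Complex.real_smul]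
      rw [← mul_assoc, ← add_mul, Complex.re_add_im]
    rw [this, map_add, map_smul, map_smul]; simp
  have hv : v = v 0 • Pi.single 0 1 + v 1 • Pi.single 1 1 := by
    ext i; fin_cases i <;> simp
  have h1 : l v = l (v 0 • Pi.single 0 1) + l (v 1 • Pi.single 1 1) := by
    rw [← map_add, ← hv]
  have h2 : l (Complex.I • v) = l ((Complex.I * v 0) • Pi.single 0 1) +
      l ((Complex.I * v 1) • Pi.single 1 1) := by
    rw [← map_add, mul_smul, mul_smul, ← smul_add, ← hv]
  rw [h1, h2]
  simp only [key (v 0), key (v 1), key (Complex.I * v 0), key (Complex.I * v 1)]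
  apply Complex.ext <;> simp <;> ring

/-- Jacobian -/
def Jac (u : Cn 2 → Cn 2) (x : Cn 2) : ℂ :=
  fderiv ℂ u x (Pi.single 0 1) 0 * fderiv ℂ u x (Pi.single 1 1) 1 -
    fderiv ℂ u x (Pi.single 1 1) 0 * fderiv ℂ u x (Pi.single 0 1) 1

lemma wirt_aux (U : Cn 2 → Cn 2) (Y K : Cn 2 → ℂ) (φ : Cn 2 → ℝ) (x e : Cn 2)
    (hU : DifferentiableAt ℂ U x) (hY : DifferentiableAt ℂ Y x) (hK : DifferentiableAt ℂ K x)
    (hφ : DifferentiableAt ℝ φ (U x)) :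
    let G : Cn 2 → ℂ := fun y => (φ (U y) : ℂ) * (Y y * (starRingEnd ℂ) (K y))
    fderiv ℝ G x e - Complex.I * fderiv ℝ G x (Complex.I • e) =
      ((fderiv ℝ φ (U x) (fderiv ℂ U x e) : ℂ) -
        Complex.I * (fderiv ℝ φ (U x) (Complex.I • fderiv ℂ U x e) : ℂ)) *
          (Y x * (starRingEnd ℂ) (K x)) +
      (φ (U x) : ℂ) * (2 * fderiv ℂ Y x e * (starRingEnd ℂ) (K x)) := by
  intro G
  have h1 : HasFDerivAt (fun y => (φ (U y) : ℂ))
      (Complex.ofRealCLM.comp ((fderiv ℝ φ (U x)).comp ((fderiv ℂ U x).restrictScalars ℝ))) x :=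
    Complex.ofRealCLM.hasFDerivAt.comp x
      (hφ.hasFDerivAt.comp x (hU.hasFDerivAt.restrictScalars ℝ))
  have h2 : HasFDerivAt Y ((fderiv ℂ Y x).restrictScalars ℝ) x := hY.hasFDerivAt.restrictScalars ℝ
  have h3 : HasFDerivAt (fun y => (starRingEnd ℂ) (K y))
      ((Complex.conjCLE : ℂ →L[ℝ] ℂ).comp ((fderiv ℂ K x).restrictScalars ℝ)) x :=
    (Complex.conjCLE : ℂ →L[ℝ] ℂ).hasFDerivAt.comp x (hK.hasFDerivAt.restrictScalars ℝ)
  have h := (h1.mul (h2.mul h3)).fderiv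
  have hG : G = (fun y => (φ (U y) : ℂ)) * (Y * (fun y => (starRingEnd ℂ) (K y))) := rfl
  rw [hG, h]
  simp
  ring_nf
  simp
  ring

lemma div_aux (U W : Cn 2 → Cn 2) (φ : Cn 2 → ℝ) (x : Cn 2)
    (hU : AnalyticAt ℂ U x) (hW : AnalyticAt ℂ W x) (hφ : DifferentiableAt ℝ φ (U x)) :
    let G0 : Cn 2 → ℂ := fun y => (φ (U y) : ℂ) * ((fderiv ℂ U y (Pi.single 1 1) 1 * W y 0 -
      fderiv ℂ U y (Pi.single 1 1) 0 * W y 1) * (starRingEnd ℂ) (Jac U y))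
    let G1 : Cn 2 → ℂ := fun y => (φ (U y) : ℂ) * ((fderiv ℂ U y (Pi.single 0 1) 0 * W y 1 -
      fderiv ℂ U y (Pi.single 0 1) 1 * W y 0) * (starRingEnd ℂ) (Jac U y))
    ((fderiv ℝ G0 x (Pi.single 0 1) - Complex.I * fderiv ℝ G0 x (Complex.I • Pi.single 0 1)) +
     (fderiv ℝ G1 x (Pi.single 1 1) - Complex.I * fderiv ℝ G1 x (Complex.I • Pi.single 1 1))).re =
    fderiv ℝ φ (U x) (W x) * Complex.normSq (Jac U x) +
      φ (U x) * (2 * ((starRingEnd ℂ) (Jac U x) *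
       (fderiv ℂ W x (Pi.single 0 1) 0 * fderiv ℂ U x (Pi.single 1 1) 1 +
        fderiv ℂ U x (Pi.single 0 1) 0 * fderiv ℂ W x (Pi.single 1 1) 1 -
        fderiv ℂ W x (Pi.single 1 1) 0 * fderiv ℂ U x (Pi.single 0 1) 1 -
        fderiv ℂ U x (Pi.single 1 1) 0 * fderiv ℂ W x (Pi.single 0 1) 1)).re) := by
  intro G0 G1
  have hDU : DifferentiableAt ℂ (fderiv ℂ U) x := hU.fderiv.differentiableAt
  have hA : ∀ (e : Cn 2) (i : Fin 2), HasFDerivAt (fun y => fderiv ℂ U y e i)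
      ((ContinuousLinearMap.proj i).comp
        ((ContinuousLinearMap.apply ℂ (Cn 2) e).comp (fderiv ℂ (fderiv ℂ U) x))) x := by
    intro e i
    exact (ContinuousLinearMap.proj (R := ℂ) (φ := fun _ : Fin 2 => ℂ) i).hasFDerivAt.comp x
      ((ContinuousLinearMap.apply ℂ (Cn 2) e).hasFDerivAt.comp x hDU.hasFDerivAt)
  have hWi : ∀ i : Fin 2, HasFDerivAt (fun y => W y i)
      ((ContinuousLinearMap.proj i).comp (fderiv ℂ W x)) x := by
    intro i
    exact (ContinuousLinearMap.proj (R := ℂ) (φ := fun _ : Fin 2 => ℂ) i).hasFDerivAt.comp x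
      hW.differentiableAt.hasFDerivAt
  have hJ : DifferentiableAt ℂ (Jac U) x := by
    unfold Jac
    exact (((hA _ 0).mul (hA _ 1)).sub ((hA _ 0).mul (hA _ 1))).differentiableAt
  have hY0 := ((hA (Pi.single 1 1) 1).mul (hWi 0)).sub ((hA (Pi.single 1 1) 0).mul (hWi 1))
  have hY1 := ((hA (Pi.single 0 1) 0).mul (hWi 1)).sub ((hA (Pi.single 0 1) 1).mul (hWi 0))
  have e0 := wirt_aux U _ (Jac U) φ x (Pi.single 0 1) hU.differentiableAt hY0.differentiableAt hJ hφ
  have e1 := wirt_aux U _ (Jac U) φ x (Pi.single 1 1) hU.differentiableAt hY1.differentiableAt hJ hφ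
  rw [hY0.fderiv] at e0
  rw [hY1.fderiv] at e1
  have hsym : fderiv ℂ (fderiv ℂ U) x (Pi.single 0 1) (Pi.single 1 1) =
      fderiv ℂ (fderiv ℂ U) x (Pi.single 1 1) (Pi.single 0 1) :=
    (hU.contDiffAt (n := ⊤)).isSymmSndFDerivAt (by simp) _ _
  have hw := clin_aux (fderiv ℝ φ (U x)) (W x)
  rw [clin_aux] at e0 e1
  have : ((fderiv ℝ G0 x (Pi.single 0 1) - Complex.I * fderiv ℝ G0 x (Complex.I • Pi.single 0 1)) +
     (fderiv ℝ G1 x (Pi.single 1 1) - Complex.I * fderiv ℝ G1 x (Complex.I • Pi.single 1 1))) =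
     ((fderiv ℝ φ (U x) (W x) : ℂ) - Complex.I * (fderiv ℝ φ (U x) (Complex.I • W x) : ℂ)) *
       (Complex.normSq (Jac U x) : ℂ) +
      φ (U x) * (2 * ((starRingEnd ℂ) (Jac U x) *
       (fderiv ℂ W x (Pi.single 0 1) 0 * fderiv ℂ U x (Pi.single 1 1) 1 +
        fderiv ℂ U x (Pi.single 0 1) 0 * fderiv ℂ W x (Pi.single 1 1) 1 -
        fderiv ℂ W x (Pi.single 1 1) 0 * fderiv ℂ U x (Pi.single 0 1) 1 -
        fderiv ℂ U x (Pi.single 1 1) 0 * fderiv ℂ W x (Pi.single 0 1) 1))) := by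
    refine (congrArg₂ (· + ·) e0 e1).trans ?_
    rw [hw, ← Complex.mul_conj]
    simp only [ContinuousLinearMap.sub_apply, ContinuousLinearMap.add_apply,
      ContinuousLinearMap.smul_apply, ContinuousLinearMap.comp_apply,
      ContinuousLinearMap.proj_apply, ContinuousLinearMap.apply_apply, smul_eq_mul, hsym,
      Pi.mul_apply, Pi.sub_apply]
    generalize (starRingEnd ℂ) (Jac U x) = cj
    unfold Jac
    ring
  rw [this]
  simp [Complex.add_re, Complex.mul_re]

/-- Jacobian of `u + t w`, expanded. -/
def JacT (u w : Cn 2 → Cn 2) (t : ℝ) (x : Cn 2) : ℂ :=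
  (fderiv ℂ u x (Pi.single 0 1) 0 + t * fderiv ℂ w x (Pi.single 0 1) 0) *
    (fderiv ℂ u x (Pi.single 1 1) 1 + t * fderiv ℂ w x (Pi.single 1 1) 1) -
  (fderiv ℂ u x (Pi.single 1 1) 0 + t * fderiv ℂ w x (Pi.single 1 1) 0) *
    (fderiv ℂ u x (Pi.single 0 1) 1 + t * fderiv ℂ w x (Pi.single 0 1) 1)

/-- its time derivative -/
def JacD (u w : Cn 2 → Cn 2) (t : ℝ) (x : Cn 2) : ℂ :=
  fderiv ℂ w x (Pi.single 0 1) 0 *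
    (fderiv ℂ u x (Pi.single 1 1) 1 + t * fderiv ℂ w x (Pi.single 1 1) 1) +
  (fderiv ℂ u x (Pi.single 0 1) 0 + t * fderiv ℂ w x (Pi.single 0 1) 0) *
    fderiv ℂ w x (Pi.single 1 1) 1 -
  fderiv ℂ w x (Pi.single 1 1) 0 *
    (fderiv ℂ u x (Pi.single 0 1) 1 + t * fderiv ℂ w x (Pi.single 0 1) 1) -
  (fderiv ℂ u x (Pi.single 1 1) 0 + t * fderiv ℂ w x (Pi.single 1 1) 0) *
    fderiv ℂ w x (Pi.single 0 1) 1

lemma jacT_hasDerivAt (u w : Cn 2 → Cn 2) (t : ℝ) (x : Cn 2) :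
    HasDerivAt (fun s : ℝ => JacT u w s x) (JacD u w t x) t := by
  have h : ∀ a b : ℂ, HasDerivAt (fun s : ℝ => a + s * b) b t := by
    intro a b
    have := ((Complex.ofRealCLM.hasDerivAt (x := t)).mul_const b).const_add a
    simpa using this
  refine ((((h _ _).mul (h _ _)).sub ((h _ _).mul (h _ _)))).congr_deriv ?_
  unfold JacD; ring

/-- The density and its time derivative. -/
def dens (u w : Cn 2 → Cn 2) (φ : Cn 2 → ℝ) (t : ℝ) (x : Cn 2) : ℝ :=
  φ (u x + (t : ℂ) • w x) * Complex.normSq (JacT u w t x)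

def densD (u w : Cn 2 → Cn 2) (φ : Cn 2 → ℝ) (t : ℝ) (x : Cn 2) : ℝ :=
  fderiv ℝ φ (u x + (t : ℂ) • w x) (w x) * Complex.normSq (JacT u w t x) +
    φ (u x + (t : ℂ) • w x) * (2 * ((starRingEnd ℂ) (JacT u w t x) * JacD u w t x).re)

lemma dens_hasDerivAt (u w : Cn 2 → Cn 2) (φ : Cn 2 → ℝ) (hφ : Differentiable ℝ φ)
    (t : ℝ) (x : Cn 2) :
    HasDerivAt (fun s => dens u w φ s x) (densD u w φ t x) t := by
  have h1 : HasDerivAt (fun s : ℝ => u x + (s : ℂ) • w x) (w x) t := by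
    have := ((Complex.ofRealCLM.hasDerivAt (x := t)).smul_const (w x)).const_add (u x)
    simpa using this
  have h2 := (hφ (u x + (t : ℂ) • w x)).hasFDerivAt.comp_hasDerivAt t h1
  have h3 := (jacT_hasDerivAt u w t x).norm_sq
  have h4 := h2.mul h3
  unfold dens densD
  simp only [Complex.normSq_eq_norm_sq]
  refine h4.congr_deriv ?_
  rw [Complex.inner]
  simp [mul_comm]

open MeasureTheory in
lemma densD_integral (u w : Cn 2 → Cn 2) (φ : Cn 2 → ℝ) (hφ : ContDiff ℝ 1 φ) {r r' : ℝ}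
    (hr : r' < r) (hu : AnalyticOnNhd ℂ u (ball 0 r)) (hw : AnalyticOnNhd ℂ w (ball 0 r))
    (t : ℝ) (h0 : ∀ x ∈ ball (0 : Cn 2) r, r' < ‖x‖ → φ (u x + (t : ℂ) • w x) = 0) :
    ∫ x in closedBall (0 : Cn 2) r', densD u w φ t x = 0 := by
  set U : Cn 2 → Cn 2 := fun x => u x + (t : ℂ) • w x with hUdef
  have hU : AnalyticOnNhd ℂ U (ball 0 r) := fun x hx => by
    have h := (hu x hx).add ((analyticAt_const (v := (t : ℂ))).smul (hw x hx))
    exact h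
  have hfd : ∀ x ∈ ball (0 : Cn 2) r, ∀ e i, fderiv ℂ U x e i =
      fderiv ℂ u x e i + t * fderiv ℂ w x e i := by
    intro x hx e i
    have := ((hu x hx).differentiableAt.hasFDerivAt.add
      ((hw x hx).differentiableAt.hasFDerivAt.const_smul (t : ℂ))).fderiv
    have h2 : U = u + (t : ℂ) • w := rfl
    rw [h2, this]; simp
  have hJ : ∀ x ∈ ball (0 : Cn 2) r, Jac U x = JacT u w t x := by
    intro x hx
    unfold Jac JacT
    simp only [hfd x hx]
  have hAc : ∀ (e : Cn 2) (i : Fin 2), ContDiffOn ℝ 1 (fun y => fderiv ℂ U y e i) (ball 0 r) := by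
    intro e i x hx
    have h1 : AnalyticAt ℂ (fderiv ℂ U) x := (hU x hx).fderiv
    have h2 : ContDiffAt ℂ 1 (fun y => fderiv ℂ U y e) x := h1.contDiffAt.clm_apply contDiffAt_const
    exact ((contDiffAt_pi.1 h2 i).restrict_scalars ℝ).contDiffWithinAt
  have hWc : ∀ (i : Fin 2), ContDiffOn ℝ 1 (fun y => w y i) (ball 0 r) := by
    intro i x hx
    have h2 : ContDiffAt ℂ 1 w x := (hw x hx).contDiffAt
    exact ((contDiffAt_pi.1 h2 i).restrict_scalars ℝ).contDiffWithinAt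
  have hPc : ContDiffOn ℝ 1 (fun y => (φ (U y) : ℂ)) (ball 0 r) := by
    intro x hx
    have h2 : ContDiffAt ℂ 1 U x := (hU x hx).contDiffAt
    exact (Complex.ofRealCLM.contDiff.contDiffAt.comp x
      (hφ.contDiffAt.comp x (h2.restrict_scalars ℝ))).contDiffWithinAt
  have hJc : ContDiffOn ℝ 1 (fun y => (starRingEnd ℂ) (Jac U y)) (ball 0 r) := by
    have : ContDiffOn ℝ 1 (Jac U) (ball 0 r) := by
      unfold Jac
      exact ((hAc _ 0).mul (hAc _ 1)).sub ((hAc _ 0).mul (hAc _ 1))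
    exact (Complex.conjCLE : ℂ →L[ℝ] ℂ).contDiff.comp_contDiffOn this
  set G0 : Cn 2 → ℂ := fun y => (φ (U y) : ℂ) * ((fderiv ℂ U y (Pi.single 1 1) 1 * w y 0 -
      fderiv ℂ U y (Pi.single 1 1) 0 * w y 1) * (starRingEnd ℂ) (Jac U y)) with hG0
  set G1 : Cn 2 → ℂ := fun y => (φ (U y) : ℂ) * ((fderiv ℂ U y (Pi.single 0 1) 0 * w y 1 -
      fderiv ℂ U y (Pi.single 0 1) 1 * w y 0) * (starRingEnd ℂ) (Jac U y)) with hG1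
  have hG0c : ContDiffOn ℝ 1 G0 (ball 0 r) :=
    hPc.mul ((((hAc _ 1).mul (hWc 0)).sub ((hAc _ 0).mul (hWc 1))).mul hJc)
  have hG1c : ContDiffOn ℝ 1 G1 (ball 0 r) :=
    hPc.mul ((((hAc _ 0).mul (hWc 1)).sub ((hAc _ 1).mul (hWc 0))).mul hJc)
  have hG00 : ∀ x ∈ ball (0 : Cn 2) r, r' < ‖x‖ → G0 x = 0 := by
    intro x hx hx'; simp only [hG0]; rw [h0 x hx hx']; simp
  have hG10 : ∀ x ∈ ball (0 : Cn 2) r, r' < ‖x‖ → G1 x = 0 := by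
    intro x hx hx'; simp only [hG1]; rw [h0 x hx hx']; simp
  have hsub : closedBall (0 : Cn 2) r' ⊆ ball 0 r := closedBall_subset_ball hr
  have hint : ∀ G : Cn 2 → ℂ, ContDiffOn ℝ 1 G (ball 0 r) → ∀ v : Cn 2,
      IntegrableOn (fun x => fderiv ℝ G x v) (closedBall 0 r') := by
    intro G hG v
    apply ContinuousOn.integrableOn_compact (isCompact_closedBall _ _)
    exact ((hG.continuousOn_fderiv_of_isOpen isOpen_ball le_rfl).mono hsub).clm_apply
      continuousOn_const
  have hz : ∫ x in closedBall (0 : Cn 2) r',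
      ((fderiv ℝ G0 x (Pi.single 0 1) - Complex.I * fderiv ℝ G0 x (Complex.I • Pi.single 0 1)) +
     (fderiv ℝ G1 x (Pi.single 1 1) - Complex.I * fderiv ℝ G1 x (Complex.I • Pi.single 1 1))) = 0 := by
    rw [integral_add, integral_sub, integral_sub, integral_const_mul, integral_const_mul,
      ibp_aux hr G0 hG0c hG00, ibp_aux hr G0 hG0c hG00, ibp_aux hr G1 hG1c hG10,
      ibp_aux hr G1 hG1c hG10]
    · simp
    · exact hint _ hG1c _
    · exact (hint _ hG1c _).const_mul _
    · exact hint _ hG0c _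
    · exact (hint _ hG0c _).const_mul _
    · exact (hint _ hG0c _).sub ((hint _ hG0c _).const_mul _)
    · exact (hint _ hG1c _).sub ((hint _ hG1c _).const_mul _)
  have hre := congrArg Complex.re hz
  have hIn : IntegrableOn (fun x => 
      ((fderiv ℝ G0 x (Pi.single 0 1) - Complex.I * fderiv ℝ G0 x (Complex.I • Pi.single 0 1)) +
     (fderiv ℝ G1 x (Pi.single 1 1) - Complex.I * fderiv ℝ G1 x (Complex.I • Pi.single 1 1))))
      (closedBall (0 : Cn 2) r') :=
    ((hint _ hG0c _).sub ((hint _ hG0c _).const_mul _)).add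
      ((hint _ hG1c _).sub ((hint _ hG1c _).const_mul _))
  have hcomm := Complex.reCLM.integral_comp_comm hIn
  simp only [Complex.reCLM_apply] at hcomm
  rw [hz] at hcomm
  rw [Complex.zero_re] at hcomm
  rw [← hcomm]
  refine setIntegral_congr_fun measurableSet_closedBall ?_
  intro x hx
  have hxb := hsub hx
  have := div_aux U w φ x (hU x hxb) (hw x hxb) (hφ.differentiable (by simp) _)
  simp only at this ⊢
  rw [this, hJ x hxb]
  unfold densD JacD
  simp only [hfd x hxb]
  rfl

open MeasureTheory in
lemma int_inv (u w : Cn 2 → Cn 2) (φ : Cn 2 → ℝ) (hφ : ContDiff ℝ 1 φ) {r r' : ℝ}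
    (hr : r' < r) (hu : AnalyticOnNhd ℂ u (ball 0 r)) (hw : AnalyticOnNhd ℂ w (ball 0 r))
    (h0 : ∀ t ∈ Icc (0 : ℝ) 1, ∀ x ∈ ball (0 : Cn 2) r, r' < ‖x‖ →
      φ (u x + (t : ℂ) • w x) = 0) :
    ∫ x in closedBall (0 : Cn 2) r', dens u w φ 0 x =
      ∫ x in closedBall (0 : Cn 2) r', dens u w φ 1 x := by
  have hsub : closedBall (0 : Cn 2) r' ⊆ ball 0 r := closedBall_subset_ball hr
  have hfst : ∀ (g : Cn 2 → Cn 2), AnalyticOnNhd ℂ g (ball 0 r) →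
      ContinuousOn (fun p : ℝ × Cn 2 => g p.2) (univ ×ˢ closedBall 0 r') := by
    intro g hg
    exact (hg.continuousOn.mono hsub).comp continuousOn_snd (fun p hp => hp.2)
  have hA : ∀ (g : Cn 2 → Cn 2), AnalyticOnNhd ℂ g (ball 0 r) → ∀ (e : Cn 2) (i : Fin 2),
      ContinuousOn (fun p : ℝ × Cn 2 => fderiv ℂ g p.2 e i) (univ ×ˢ closedBall 0 r') := by
    intro g hg e i
    have h1 : ContinuousOn (fderiv ℂ g) (ball 0 r) := hg.fderiv.continuousOn
    have h2 : ContinuousOn (fun p : ℝ × Cn 2 => fderiv ℂ g p.2) (univ ×ˢ closedBall 0 r') :=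
      (h1.mono hsub).comp continuousOn_snd (fun p hp => hp.2)
    exact continuousOn_pi.1 (h2.clm_apply continuousOn_const) i
  have ht : ContinuousOn (fun p : ℝ × Cn 2 => (p.1 : ℂ)) (univ ×ˢ closedBall (0 : Cn 2) r') := by
    fun_prop
  have hU : ContinuousOn (fun p : ℝ × Cn 2 => u p.2 + (p.1 : ℂ) • w p.2)
      (univ ×ˢ closedBall (0 : Cn 2) r') := (hfst u hu).add (ht.smul (hfst w hw))
  have hJT : ContinuousOn (fun p : ℝ × Cn 2 => JacT u w p.1 p.2)
      (univ ×ˢ closedBall (0 : Cn 2) r') := by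
    unfold JacT
    have := hA u hu
    have := hA w hw
    fun_prop
  have hJD : ContinuousOn (fun p : ℝ × Cn 2 => JacD u w p.1 p.2)
      (univ ×ˢ closedBall (0 : Cn 2) r') := by
    unfold JacD
    have := hA u hu
    have := hA w hw
    fun_prop
  have hφ1 := hφ.continuous
  have hφ2 := hφ.continuous_fderiv (by simp)
  have hD : ContinuousOn (fun p : ℝ × Cn 2 => densD u w φ p.1 p.2)
      (univ ×ˢ closedBall (0 : Cn 2) r') := by
    unfold densD
    refine ContinuousOn.add (ContinuousOn.mul ?_ ?_) (ContinuousOn.mul ?_ ?_)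
    · exact (hφ2.comp_continuousOn hU).clm_apply (hfst w hw)
    · exact Complex.continuous_normSq.comp_continuousOn hJT
    · exact hφ1.comp_continuousOn hU
    · exact continuousOn_const.mul (Complex.continuous_re.comp_continuousOn
        ((Complex.continuous_conj.comp_continuousOn hJT).mul hJD))
  have hd : ContinuousOn (fun p : ℝ × Cn 2 => dens u w φ p.1 p.2)
      (univ ×ˢ closedBall (0 : Cn 2) r') := by
    unfold dens
    exact (hφ1.comp_continuousOn hU).mul (Complex.continuous_normSq.comp_continuousOn hJT)
  have hdi : ∀ t : ℝ, IntegrableOn (fun x => dens u w φ t x) (closedBall (0 : Cn 2) r') := by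
    intro t
    apply ContinuousOn.integrableOn_compact (isCompact_closedBall _ _)
    exact hd.comp (f := fun x => (t, x)) (by fun_prop) (fun x hx => ⟨mem_univ _, hx⟩)
  rw [← sub_eq_zero, ← neg_eq_zero, neg_sub, ← integral_sub (hdi 1) (hdi 0)]
  have hftc : ∀ x ∈ closedBall (0 : Cn 2) r', dens u w φ 1 x - dens u w φ 0 x =
      ∫ t in (0:ℝ)..1, densD u w φ t x := by
    intro x hx
    rw [intervalIntegral.integral_eq_sub_of_hasDerivAt (f := fun t => dens u w φ t x)
      (fun t _ => dens_hasDerivAt u w φ (hφ.differentiable (by simp)) t x)]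
    apply ContinuousOn.intervalIntegrable
    exact hD.comp (f := fun t => (t, x)) (by fun_prop) (fun t _ => ⟨mem_univ _, hx⟩)
  rw [setIntegral_congr_fun measurableSet_closedBall hftc]
  simp only [intervalIntegral.integral_of_le zero_le_one, ← integral_Icc_eq_integral_Ioc]
  rw [integral_integral_swap]
  · rw [setIntegral_congr_fun (g := fun _ => (0 : ℝ)) measurableSet_Icc]
    · simp
    · intro t ht'
      exact densD_integral u w φ hφ hr hu hw t (h0 t ht')
  · rw [Measure.prod_restrict]
    have : ContinuousOn (Function.uncurry fun (x : Cn 2) (t : ℝ) => densD u w φ t x)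
       (closedBall (0 : Cn 2) r' ×ˢ Icc (0:ℝ) 1) := by
      exact hD.comp (f := fun p : Cn 2 × ℝ => (p.2, p.1)) (by fun_prop)
        (fun p hp => ⟨mem_univ _, hp.1⟩)
    exact this.integrableOn_compact ((isCompact_closedBall _ _).prod isCompact_Icc)

lemma det_restrict_aux (L : Cn 2 →L[ℂ] Cn 2) :
    (L.restrictScalars ℝ).det = Complex.normSq
      (L (Pi.single 0 1) 0 * L (Pi.single 1 1) 1 - L (Pi.single 1 1) 0 * L (Pi.single 0 1) 1) := by
  have h1 : (L.restrictScalars ℝ).det =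
      LinearMap.det ((L : Cn 2 →ₗ[ℂ] Cn 2).restrictScalars ℝ) := rfl
  rw [h1, LinearMap.det_restrictScalars, Algebra.norm_complex_apply, ← LinearMap.det_toMatrix',
    Matrix.det_fin_two]
  simp [LinearMap.toMatrix'_apply]

lemma strict_of_analytic {u : Cn 2 → Cn 2} {x : Cn 2} (hu : AnalyticAt ℂ u x)
    (hb : Function.Bijective (fderiv ℂ u x)) :
    ∃ L : Cn 2 ≃L[ℂ] Cn 2, (L : Cn 2 →L[ℂ] Cn 2) = fderiv ℂ u x ∧
      HasStrictFDerivAt u (L : Cn 2 →L[ℂ] Cn 2) x := by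
  let L : Cn 2 ≃L[ℂ] Cn 2 :=
    (LinearEquiv.ofBijective (fderiv ℂ u x : Cn 2 →ₗ[ℂ] Cn 2) hb).toContinuousLinearEquiv
  have hL : (L : Cn 2 →L[ℂ] Cn 2) = fderiv ℂ u x := by ext1 v; rfl
  exact ⟨L, hL, hL ▸ hu.hasStrictFDerivAt⟩

open MeasureTheory in
lemma count_aux (u : Cn 2 → Cn 2) {r r' η : ℝ} (hr : r' < r) (hη : 0 < η)
    (hu : AnalyticOnNhd ℂ u (ball 0 r))
    (hout : ∀ x ∈ ball (0 : Cn 2) r, r' ≤ ‖x‖ → η ≤ ‖u x‖)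
    (hreg : IsRegularValueOn u (ball 0 r) 0) :
    ∃ ε > 0, ∀ φ : Cn 2 → ℝ, Continuous φ → Function.support φ ⊆ ball 0 ε →
      ∫ x in closedBall (0 : Cn 2) r', φ (u x) * Complex.normSq (Jac u x) =
        ({x ∈ ball (0 : Cn 2) r | u x = 0}.ncard : ℝ) * ∫ x, φ x := by
  have hsub : closedBall (0 : Cn 2) r' ⊆ ball 0 r := closedBall_subset_ball hr
  set Z : Set (Cn 2) := {x ∈ ball (0 : Cn 2) r | u x = 0} with hZ
  have hZr' : ∀ x ∈ Z, ‖x‖ < r' := by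
    intro x hx
    by_contra h
    have := hout x hx.1 (not_lt.1 h)
    rw [hx.2, norm_zero] at this; linarith
  have hcont : ContinuousOn u (closedBall 0 r') := hu.continuousOn.mono hsub
  -- local injectivity
  have hloc : ∀ x ∈ Z, ∃ V : Set (Cn 2), IsOpen V ∧ x ∈ V ∧ V ⊆ ball 0 r' ∧ InjOn u V := by
    intro x hx
    obtain ⟨L, hL, hs⟩ := strict_of_analytic (hu x hx.1) (hreg x hx.1 hx.2)
    have h1 := hs.mem_toOpenPartialHomeomorph_source
    refine ⟨(hs.toOpenPartialHomeomorph u).source ∩ ball 0 r',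
      (hs.toOpenPartialHomeomorph u).open_source.inter isOpen_ball, ⟨h1, by simpa using hZr' x hx⟩,
      inter_subset_right, ?_⟩
    have := (hs.toOpenPartialHomeomorph u).injOn
    exact this.mono inter_subset_left
  have hZc : IsCompact Z := by
    have : Z = closedBall 0 r' ∩ u ⁻¹' {0} := by
      ext x
      constructor
      · intro hx
        exact ⟨by simpa using (hZr' x hx).le, hx.2⟩
      · intro hx
        exact ⟨hsub hx.1, hx.2⟩
    rw [this]
    exact (isCompact_closedBall (0 : Cn 2) r').of_isClosed_subset
      (hcont.preimage_isClosed_of_isClosed isClosed_closedBall isClosed_singleton)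
      inter_subset_left
  choose! V hVo hxV hVb hVi using hloc
  have hZf : Z.Finite := by
    obtain ⟨b, hbZ, hcov⟩ := hZc.elim_nhds_subcover V
      (fun x hx => (hVo x hx).mem_nhds (hxV x hx))
    refine b.finite_toSet.subset ?_
    intro y hy
    obtain ⟨x, hx, hyx⟩ := mem_iUnion₂.1 (hcov hy)
    have : y = x := hVi x (hbZ x hx) hyx (hxV x (hbZ x hx)) (by rw [hy.2, (hbZ x hx).2])
    rw [this]; exact hx
  obtain ⟨S, hS, hdisj⟩ := hZf.t2_separation
  set W : Cn 2 → Set (Cn 2) := fun x => V x ∩ S x with hW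
  have hWo : ∀ x ∈ Z, IsOpen (W x) := fun x hx => (hVo x hx).inter (hS x).2
  have hxW : ∀ x ∈ Z, x ∈ W x := fun x hx => ⟨hxV x hx, (hS x).1⟩
  have hWK : ∀ x ∈ Z, W x ⊆ closedBall 0 r' := fun x hx =>
    inter_subset_left.trans ((hVb x hx).trans ball_subset_closedBall)
  have himg : ∀ x ∈ Z, u '' W x ∈ 𝓝 (0 : Cn 2) := by
    intro x hx
    obtain ⟨L, hL, hs⟩ := strict_of_analytic (hu x hx.1) (hreg x hx.1 hx.2)
    have := hs.map_nhds_eq_of_equiv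
    rw [hx.2] at this
    rw [← this]
    exact image_mem_map ((hWo x hx).mem_nhds (hxW x hx))
  have he1 : ∃ ε > 0, ∀ x ∈ Z, ball 0 ε ⊆ u '' W x := by
    have : (⋂ x ∈ Z, u '' W x) ∈ 𝓝 (0 : Cn 2) := (biInter_mem hZf).2 himg
    obtain ⟨ε, hε, h⟩ := Metric.mem_nhds_iff.1 this
    exact ⟨ε, hε, fun x hx => h.trans (biInter_subset_of_mem hx)⟩
  have he2 : ∃ ε > 0, ∀ y ∈ closedBall (0 : Cn 2) r', y ∉ (⋃ x ∈ Z, W x) → ε ≤ ‖u y‖ := by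
    have hc : IsCompact (closedBall (0 : Cn 2) r' \ ⋃ x ∈ Z, W x) :=
      (isCompact_closedBall _ _).diff (isOpen_biUnion hWo)
    rcases (closedBall (0 : Cn 2) r' \ ⋃ x ∈ Z, W x).eq_empty_or_nonempty with h | h
    · refine ⟨1, one_pos, fun y hy hy' => ?_⟩
      have : y ∈ (closedBall (0 : Cn 2) r' \ ⋃ x ∈ Z, W x) := ⟨hy, hy'⟩
      rw [h] at this; exact this.elim
    · obtain ⟨y, hy, hmin⟩ := hc.exists_isMinOn h (hcont.mono sdiff_subset).norm
      refine ⟨‖u y‖, ?_, fun z hz hz' => hmin ⟨hz, hz'⟩⟩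
      rw [gt_iff_lt, norm_pos_iff]
      intro h0
      have hyZ : y ∈ Z := ⟨hsub hy.1, h0⟩
      exact hy.2 (mem_biUnion hyZ (hxW y hyZ))
  obtain ⟨ε1, hε1, h1⟩ := he1
  obtain ⟨ε2, hε2, h2⟩ := he2
  refine ⟨min ε1 ε2, lt_min hε1 hε2, fun φ hφ hsupp => ?_⟩
  have hJc : ContinuousOn (Jac u) (closedBall 0 r') := by
    have h1 : ContinuousOn (fderiv ℂ u) (closedBall 0 r') := hu.fderiv.continuousOn.mono hsub
    have h3 : ∀ (e : Cn 2) (i : Fin 2), ContinuousOn (fun y => fderiv ℂ u y e i)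
        (closedBall 0 r') := fun e i =>
      continuousOn_pi.1 (h1.clm_apply continuousOn_const) i
    unfold Jac
    exact ((h3 _ 0).mul (h3 _ 1)).sub ((h3 _ 0).mul (h3 _ 1))
  have hInt : IntegrableOn (fun x => φ (u x) * Complex.normSq (Jac u x)) (closedBall 0 r') :=
    ((hφ.comp_continuousOn hcont).mul
      (Complex.continuous_normSq.comp_continuousOn hJc)).integrableOn_compact
        (isCompact_closedBall _ _)
  have hUsub : (⋃ x ∈ hZf.toFinset, W x) ⊆ closedBall 0 r' := by
    intro y hy
    obtain ⟨x, hx, hyx⟩ := mem_iUnion₂.1 hy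
    exact hWK x (hZf.mem_toFinset.1 hx) hyx
  have e1 : ∫ x in closedBall (0 : Cn 2) r', φ (u x) * Complex.normSq (Jac u x) =
      ∫ x in ⋃ x ∈ hZf.toFinset, W x, φ (u x) * Complex.normSq (Jac u x) := by
    apply setIntegral_eq_of_subset_of_forall_sdiff_eq_zero measurableSet_closedBall hUsub
    intro y hy
    have hle := h2 y hy.1 (by simpa using hy.2)
    have : φ (u y) = 0 := by
      by_contra h
      have := hsupp h
      simp only [mem_ball, dist_zero_right, lt_min_iff] at this
      linarith
    rw [this, zero_mul]
  have e2 : ∀ x ∈ Z, ∫ y in W x, φ (u y) * Complex.normSq (Jac u y) = ∫ y, φ y := by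
    intro x hx
    have hcv := integral_image_eq_integral_abs_det_fderiv_smul volume (hWo x hx).measurableSet
      (f := u) (f' := fun y => (fderiv ℂ u y).restrictScalars ℝ) (fun y hy =>
        ((hu y (hsub (hWK x hx hy))).differentiableAt.hasFDerivAt.restrictScalars
          ℝ).hasFDerivWithinAt) ((hVi x hx).mono inter_subset_left) φ
    have h3 : ∫ y in u '' W x, φ y = ∫ y, φ y := by
      apply setIntegral_eq_integral_of_forall_compl_eq_zero
      intro y hy
      by_contra h
      exact hy (h1 x hx (ball_subset_ball (min_le_left _ _) (hsupp h)))
    rw [← h3, hcv]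
    refine setIntegral_congr_fun (hWo x hx).measurableSet ?_
    intro y _
    simp only [det_restrict_aux, smul_eq_mul]
    rw [abs_of_nonneg (Complex.normSq_nonneg _), mul_comm]
    rfl
  rw [e1, integral_biUnion_finset]
  · rw [Finset.sum_congr rfl (fun x hx => e2 x (hZf.mem_toFinset.1 hx)), Finset.sum_const,
      nsmul_eq_mul, ncard_eq_toFinset_card Z hZf]
  · intro x hx
    exact (hWo x (hZf.mem_toFinset.1 hx)).measurableSet
  · intro x hx y hy hxy
    have hx' : x ∈ Z := by simpa using hx
    have hy' : y ∈ Z := by simpa using hy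
    exact (hdisj hx' hy' hxy).mono inter_subset_right inter_subset_right
  · intro x hx
    exact hInt.mono_set (hWK x (hZf.mem_toFinset.1 hx))

lemma jacT_zero (u w : Cn 2 → Cn 2) (x : Cn 2) : JacT u w 0 x = Jac u x := by
  simp [JacT, Jac]

lemma jacT_one (u v : Cn 2 → Cn 2) (x : Cn 2) (hu : AnalyticAt ℂ u x) (hv : AnalyticAt ℂ v x) :
    JacT u (v - u) 1 x = Jac v x := by
  unfold JacT Jac
  rw [fderiv_sub hv.differentiableAt hu.differentiableAt]
  simp

open MeasureTheory in
lemma rouche_aux (u v : Cn 2 → Cn 2) {r r' η : ℝ} (hr : r' < r) (hη : 0 < η)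
    (hu : AnalyticOnNhd ℂ u (ball 0 r)) (hv : AnalyticOnNhd ℂ v (ball 0 r))
    (hout : ∀ t ∈ Icc (0 : ℝ) 1, ∀ x ∈ ball (0 : Cn 2) r, r' ≤ ‖x‖ →
      η ≤ ‖u x + (t : ℂ) • (v x - u x)‖)
    (hru : IsRegularValueOn u (ball 0 r) 0) (hrv : IsRegularValueOn v (ball 0 r) 0) :
    {x ∈ ball (0 : Cn 2) r | u x = 0}.ncard = {x ∈ ball (0 : Cn 2) r | v x = 0}.ncard := by
  obtain ⟨ε1, hε1, h1⟩ := count_aux u hr hη hu (fun x hx hx' => by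
    simpa using hout 0 (by simp) x hx hx') hru
  obtain ⟨ε2, hε2, h2⟩ := count_aux v hr hη hv (fun x hx hx' => by
    simpa using hout 1 (by simp) x hx hx') hrv
  set ε := min (min ε1 ε2) η with hε
  have hεp : 0 < ε := lt_min (lt_min hε1 hε2) hη
  let φ : ContDiffBump (0 : Cn 2) := ⟨ε / 2, ε, by linarith, by linarith⟩
  have hsupp : Function.support φ = ball 0 ε := φ.support_eq
  have hφ : ContDiff ℝ 1 φ := φ.contDiff
  have e1 := h1 φ hφ.continuous (hsupp.subset.trans
    (ball_subset_ball ((min_le_left _ _).trans (min_le_left _ _))))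
  have e2 := h2 φ hφ.continuous (hsupp.subset.trans
    (ball_subset_ball ((min_le_left _ _).trans (min_le_right _ _))))
  have hsub : closedBall (0 : Cn 2) r' ⊆ ball 0 r := closedBall_subset_ball hr
  have hinv := int_inv u (v - u) φ hφ hr hu (fun x hx => (hv x hx).sub (hu x hx)) (by
    intro t ht x hx hx'
    have := hout t ht x hx hx'.le
    rw [← Function.notMem_support, hsupp]
    simp only [mem_ball, dist_zero_right, not_lt]
    exact (min_le_right _ _).trans this)
  have c1 : ∫ x in closedBall (0 : Cn 2) r', dens u (v - u) φ 0 x =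
      ∫ x in closedBall (0 : Cn 2) r', φ (u x) * Complex.normSq (Jac u x) := by
    refine setIntegral_congr_fun measurableSet_closedBall ?_
    intro x _
    simp [dens, jacT_zero]
  have c2 : ∫ x in closedBall (0 : Cn 2) r', dens u (v - u) φ 1 x =
      ∫ x in closedBall (0 : Cn 2) r', φ (v x) * Complex.normSq (Jac v x) := by
    refine setIntegral_congr_fun measurableSet_closedBall ?_
    intro x hx
    simp [dens, jacT_one u v x (hu x (hsub hx)) (hv x (hsub hx))]
  rw [c1, c2, e1, e2] at hinv
  have hpos : 0 < ∫ x, φ x := φ.integral_pos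
  exact_mod_cast mul_right_cancel₀ hpos.ne' hinv

open MeasureTheory in
lemma sard_aux (k : Cn 2 → Cn 2) {r : ℝ} (hk : AnalyticOnNhd ℂ k (ball 0 r)) :
    ∀ ε > 0, ∃ q : Cn 2, ‖q‖ < ε ∧ IsRegularValueOn k (ball 0 r) q := by
  intro ε hε
  set S : Set (Cn 2) := {x ∈ ball (0 : Cn 2) r | ¬ Function.Bijective (fderiv ℂ k x)} with hS
  have hz : volume (k '' S) = 0 := by
    refine addHaar_image_eq_zero_of_det_fderivWithin_eq_zero volume
      (f' := fun y => (fderiv ℂ k y).restrictScalars ℝ) (fun y hy =>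
        ((hk y hy.1).differentiableAt.hasFDerivAt.restrictScalars ℝ).hasFDerivWithinAt) ?_
    intro y hy
    by_contra h
    apply hy.2
    have h1 : IsUnit (LinearMap.det ((fderiv ℂ k y).restrictScalars ℝ : Cn 2 →ₗ[ℝ] Cn 2)) :=
      isUnit_iff_ne_zero.2 h
    have h2 := (Module.End.isUnit_iff _).1 ((LinearMap.isUnit_iff_isUnit_det
      ((fderiv ℂ k y).restrictScalars ℝ : Cn 2 →ₗ[ℝ] Cn 2)).2 h1)
    exact h2
  have : ∃ q ∈ ball (0 : Cn 2) ε, q ∉ k '' S := by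
    by_contra! h
    have h2 : volume (ball (0 : Cn 2) ε) ≤ 0 := hz ▸ measure_mono h
    exact (measure_ball_pos volume (0 : Cn 2) hε).not_ge h2
  obtain ⟨q, hq, hq'⟩ := this
  refine ⟨q, by simpa using hq, fun x hx hxq => ?_⟩
  by_contra h
  exact hq' ⟨x, ⟨hx, h⟩, hxq⟩

lemma regular_sub {h : Cn 2 → Cn 2} {s s' : Set (Cn 2)} {q : Cn 2} (hss : s' ⊆ s)
    (hh : IsRegularValueOn h s q) : IsRegularValueOn (fun x => h x - q) s' 0 := by
  intro x hx hxq
  rw [fderiv_sub_const]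
  exact hh x (hss hx) (sub_eq_zero.1 hxq)

lemma transfer_aux (h k : Cn 2 → Cn 2) (hk : AnalyticAt ℂ k 0)
    (heq : k ~[𝓝 0] h) {m : ℕ} (hh : HasZeroOrder h 0 m) : HasZeroOrder k 0 m := by
  obtain ⟨r0, hr0, hha, hh0, hhz, hhreg, δ0, hδ0, hcount⟩ := hh
  have hev : ∀ᶠ x in 𝓝 (0 : Cn 2), AnalyticAt ℂ k x ∧ ‖k x - h x‖ ≤ (1/2) * ‖h x‖ :=
    hk.eventually_analyticAt.and (heq.bound (by norm_num))
  obtain ⟨ρ, hρ, hball⟩ := Metric.eventually_nhds_iff_ball.1 hev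
  set r := min (ρ / 2) r0 with hrdef
  have hr : 0 < r := lt_min (by linarith) hr0
  have hrρ : closedBall (0 : Cn 2) r ⊆ ball 0 ρ :=
    closedBall_subset_ball ((min_le_left _ _).trans_lt (by linarith))
  have hrr0 : closedBall (0 : Cn 2) r ⊆ closedBall 0 r0 := closedBall_subset_closedBall (min_le_right _ _)
  have hbr : ball (0 : Cn 2) r ⊆ ball 0 r0 := ball_subset_ball (min_le_right _ _)
  have hka : AnalyticOnNhd ℂ k (closedBall 0 r) := fun x hx => (hball x (hrρ hx)).1
  have hkab : AnalyticOnNhd ℂ k (ball 0 r) := hka.mono ball_subset_closedBall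
  have hk0 : k 0 = 0 := by
    have := (hball 0 (mem_ball_self hρ)).2
    rw [hh0] at this
    simpa using this
  have hkz : ∀ x ∈ closedBall (0 : Cn 2) r, k x = 0 → x = 0 := by
    intro x hx hx0
    apply hhz x (hrr0 hx)
    have := (hball x (hrρ hx)).2
    rw [hx0, zero_sub, norm_neg] at this
    exact norm_le_zero_iff.1 (by linarith)
  obtain ⟨m0, hm0, hm⟩ : ∃ m0 > 0, ∀ x ∈ closedBall (0 : Cn 2) r0, r / 2 ≤ ‖x‖ → m0 ≤ ‖h x‖ := by
    have hc : IsCompact (closedBall (0 : Cn 2) r0 ∩ {x | r / 2 ≤ ‖x‖}) :=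
      (isCompact_closedBall _ _).inter_right (isClosed_le continuous_const continuous_norm)
    rcases (closedBall (0 : Cn 2) r0 ∩ {x | r / 2 ≤ ‖x‖}).eq_empty_or_nonempty with he | he
    · refine ⟨1, one_pos, fun y hy hy' => ?_⟩
      have : y ∈ (closedBall (0 : Cn 2) r0 ∩ {x | r / 2 ≤ ‖x‖}) := ⟨hy, hy'⟩
      rw [he] at this; exact this.elim
    · obtain ⟨y, hy, hmin⟩ := hc.exists_isMinOn he (hha.continuousOn.mono inter_subset_left).norm
      refine ⟨‖h y‖, ?_, fun z hz hz' => hmin ⟨hz, hz'⟩⟩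
      rw [gt_iff_lt, norm_pos_iff]
      intro h0
      have h1 : r / 2 ≤ ‖y‖ := hy.2
      rw [hhz y hy.1 h0, norm_zero] at h1
      linarith
  refine ⟨r, hr, hka, hk0, hkz, sard_aux k hkab, min δ0 (m0 / 8), lt_min hδ0 (by linarith), ?_⟩
  intro q hq hqreg
  obtain ⟨q0, hq0, hq0reg⟩ := hhreg (min δ0 (m0 / 8)) (lt_min hδ0 (by linarith))
  rw [lt_min_iff] at hq hq0
  have hm' := hcount q0 hq0.1 hq0reg
  have hR := rouche_aux (fun x => h x - q0) (fun x => k x - q) (r := r) (r' := r / 2) (η := m0 / 8)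
    (by linarith) (by linarith)
    (fun x hx => (hha x (hrr0 (ball_subset_closedBall hx))).sub analyticAt_const)
    (fun x hx => (hkab x hx).sub analyticAt_const) ?_ (regular_sub hbr hq0reg)
    (regular_sub subset_rfl hqreg)
  · simp only [sub_eq_zero] at hR
    rw [← hR, ← hm']
    congr 1
    ext x
    constructor
    · rintro ⟨hx, hx'⟩; exact ⟨hbr hx, hx'⟩
    · rintro ⟨hx, hx'⟩
      refine ⟨?_, hx'⟩
      by_contra hc
      simp only [mem_ball, dist_zero_right, not_lt] at hc
      have := hm x (ball_subset_closedBall hx) (by linarith)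
      rw [hx'] at this
      linarith [hq0.2]
  · intro t ht x hx hx'
    have hb := (hball x (hrρ (ball_subset_closedBall hx))).2
    have hmx := hm x (hrr0 (ball_subset_closedBall hx)) hx'
    have hid : h x = ((h x - q0) + (t : ℂ) • ((k x - q) - (h x - q0))) + q0 -
        (t : ℂ) • (k x - h x) + (t : ℂ) • (q - q0) := by
      module
    have hn : ‖(t : ℂ)‖ ≤ 1 := by
      rw [Complex.norm_real, Real.norm_eq_abs, abs_of_nonneg ht.1]; exact ht.2
    have n1 : ‖(t : ℂ) • (k x - h x)‖ ≤ ‖k x - h x‖ := by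
      rw [norm_smul]; exact mul_le_of_le_one_left (norm_nonneg _) hn
    have n2 : ‖(t : ℂ) • (q - q0)‖ ≤ ‖q - q0‖ := by
      rw [norm_smul]; exact mul_le_of_le_one_left (norm_nonneg _) hn
    have n3 := norm_sub_le q q0
    have n4 : ‖h x‖ ≤ ‖(h x - q0) + (t : ℂ) • ((k x - q) - (h x - q0))‖ + ‖q0‖ +
        ‖(t : ℂ) • (k x - h x)‖ + ‖(t : ℂ) • (q - q0)‖ := by
      conv_lhs => rw [hid]
      refine (norm_add_le _ _).trans (add_le_add_left ?_ _)
      refine (norm_sub_le _ _).trans (add_le_add_left ?_ _)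
      exact norm_add_le _ _
    linarith [hq.2, hq0.2]

lemma linear_transfer (L : Cn 2 ≃L[ℂ] Cn 2) (k : Cn 2 → Cn 2) {m : ℕ}
    (hh : HasZeroOrder k 0 m) : HasZeroOrder (fun x => L (k x)) 0 m := by
  obtain ⟨r, hr, hka, hk0, hkz, hreg, δ, hδ, hcount⟩ := hh
  have hfd : ∀ x, fderiv ℂ (fun x => L (k x)) x = (L : Cn 2 →L[ℂ] Cn 2).comp (fderiv ℂ k x) :=
    fun x => L.comp_fderiv (f := k)
  have hR : ∀ q, IsRegularValueOn (fun x => L (k x)) (ball 0 r) q ↔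
      IsRegularValueOn k (ball 0 r) (L.symm q) := by
    intro q
    unfold IsRegularValueOn
    refine forall₂_congr fun x _ => ?_
    rw [hfd]
    have h1 : L (k x) = q ↔ k x = L.symm q := by
      rw [ContinuousLinearEquiv.eq_symm_apply]
    have h2 : Function.Bijective ((L : Cn 2 →L[ℂ] Cn 2).comp (fderiv ℂ k x)) ↔
        Function.Bijective (fderiv ℂ k x) :=
      Function.Bijective.of_comp_iff' L.bijective _
    rw [h1, h2]
  refine ⟨r, hr, fun x hx => ((L : Cn 2 →L[ℂ] Cn 2).analyticAt _).comp (hka x hx), by simp [hk0], fun x hx h0 => hkz x hx (by simpa using h0), ?_, ?_⟩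
  · intro ε hε
    have : ∀ᶠ q in 𝓝 (0 : Cn 2), ‖L q‖ < ε := by
      have : Tendsto (fun q => ‖L q‖) (𝓝 0) (𝓝 0) := by
        have := (L.continuous.norm).tendsto 0
        simpa using this
      exact this.eventually (gt_mem_nhds hε)
    obtain ⟨ρ, hρ, hb⟩ := Metric.eventually_nhds_iff_ball.1 this
    obtain ⟨q, hq, hq'⟩ := hreg ρ hρ
    exact ⟨L q, hb q (by simpa using hq), (hR _).2 (by simpa using hq')⟩
  · have : ∀ᶠ q in 𝓝 (0 : Cn 2), ‖L.symm q‖ < δ := by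
      have : Tendsto (fun q => ‖L.symm q‖) (𝓝 0) (𝓝 0) := by
        have := (L.symm.continuous.norm).tendsto 0
        simpa using this
      exact this.eventually (gt_mem_nhds hδ)
    obtain ⟨ρ, hρ, hb⟩ := Metric.eventually_nhds_iff_ball.1 this
    refine ⟨ρ, hρ, fun q hq hq' => ?_⟩
    rw [← hcount (L.symm q) (hb q (by simpa using hq)) ((hR q).1 hq')]
    congr 1
    ext x
    simp only [mem_ofPred_eq, ContinuousLinearEquiv.eq_symm_apply]

lemma zeroOrder_congr (h k : Cn 2 → Cn 2) (L : Cn 2 ≃L[ℂ] Cn 2) (hh : AnalyticAt ℂ h 0)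
    (hk : AnalyticAt ℂ k 0)
    (heq : (fun x => k x - L (h x)) =o[𝓝 0] h) : zeroOrder h 0 = zeroOrder k 0 := by
  have hLs : AnalyticAt ℂ (fun x => L.symm (k x)) 0 :=
    ((L.symm : Cn 2 →L[ℂ] Cn 2).analyticAt _).comp hk
  have heq' : (fun x => L.symm (k x)) ~[𝓝 0] h := by
    unfold IsEquivalent
    refine IsBigO.trans_isLittleO ?_ heq
    have := (L.symm : Cn 2 →L[ℂ] Cn 2).isBigO_comp (fun x => k x - L (h x)) (𝓝 0)
    refine this.congr_left fun x => ?_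
    simp
  unfold zeroOrder
  congr 1
  ext m
  constructor
  · intro hm
    have h1 := linear_transfer L _ (transfer_aux h _ hLs heq' hm)
    simpa using h1
  · intro hm
    exact transfer_aux _ h hh heq'.symm (linear_transfer L.symm _ hm)

lemma iter_analytic {g : Cn 2 → Cn 2} (hg : AnalyticAt ℂ g 0) (h0 : g 0 = 0) (j : ℕ) :
    AnalyticAt ℂ (g^[j]) 0 ∧ g^[j] 0 = 0 := by
  induction j with
  | zero => exact ⟨analyticAt_id, rfl⟩
  | succ k ih =>
    rw [Function.iterate_succ']
    refine ⟨AnalyticAt.comp (by rw [ih.2]; exact hg) ih.1, ?_⟩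
    simp [ih.2, h0]

lemma iter_index {g : Cn 2 → Cn 2} (hg : AnalyticAt ℂ g 0) (h0 : g 0 = 0) (p : ℕ)
    (L : Cn 2 ≃L[ℂ] Cn 2)
    (hL : ∀ x, L x = ∑ j ∈ Finset.range p, ((fderiv ℂ g 0) ^ j) x) :
    zeroOrder (fun x => x - g x) 0 = zeroOrder (fun x => x - g^[p] x) 0 := by
  refine zeroOrder_congr _ _ L (analyticAt_id.sub hg)
    (analyticAt_id.sub (iter_analytic hg h0 p).1) ?_
  have hs : HasStrictFDerivAt g (fderiv ℂ g 0) 0 := hg.hasStrictFDerivAt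
  have e : ∀ x, (x - g^[p] x) - L (x - g x) = ∑ j ∈ Finset.range p,
      (g^[j] x - g^[j] (g x) - ((fderiv ℂ g 0) ^ j) (x - g x)) := by
    intro x
    rw [hL, Finset.sum_sub_distrib]
    congr 1
    have := Finset.sum_range_sub' (fun j => g^[j] x) p
    simp only [Function.iterate_succ_apply] at this
    rw [this]; rfl
  simp only [e]
  refine IsLittleO.fun_sum (A := fun j (x : Cn 2) =>
    g^[j] x - g^[j] (g x) - ((fderiv ℂ g 0) ^ j) (x - g x)) fun j _ => ?_
  have hj := (HasStrictFDerivAt.iterate hs h0 j).isLittleO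
  have ht : Tendsto (fun x : Cn 2 => (x, g x)) (𝓝 0) (𝓝 ((0 : Cn 2), (0 : Cn 2))) := by
    have : ContinuousAt (fun x : Cn 2 => (x, g x)) 0 := continuousAt_id.prodMk hg.continuousAt
    simpa [ContinuousAt, h0] using this
  exact hj.comp_tendsto ht

lemma geom_bij (A : Module.End ℂ (Cn 2)) (d p : ℕ) (hp : 0 < p)
    (h : ∀ l : ℂ, A.HasEigenvalue l → l ^ (d * p) = 1 → l ^ d = 1) :
    IsUnit (∑ j ∈ Finset.range p, (A ^ d) ^ j) := by
  by_contra hn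
  have e : (∑ j ∈ Finset.range p, (A ^ d) ^ j)
      = aeval A (∑ j ∈ Finset.range p, ((X : ℂ[X]) ^ d) ^ j) := by simp
  rw [e, ← spectrum.zero_mem_iff ℂ, spectrum.map_polynomial_aeval_of_nonempty A _
    (spectrum.nonempty_of_isAlgClosed_of_finiteDimensional ℂ A)] at hn
  obtain ⟨l, hl, hl0⟩ := hn
  simp [eval_finsetSum] at hl0
  have h1 := geom_sum_mul (l ^ d) p
  rw [hl0, zero_mul] at h1
  have h2 : l ^ d = 1 := h l (Module.End.hasEigenvalue_iff_mem_spectrum.2 hl) (by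
    rw [pow_mul]; exact (sub_eq_zero.1 h1.symm))
  simp [h2] at hl0
  omega

lemma index_eq {f : Cn 2 → Cn 2} (hf : IsGerm f) (d p : ℕ) (hp : 0 < p)
    (h : ∀ l : ℂ, Module.End.HasEigenvalue ((fderiv ℂ f 0).toLinearMap) l →
      l ^ (d * p) = 1 → l ^ d = 1) :
    fixedPointIndex (f^[d]) 0 = fixedPointIndex (f^[d * p]) 0 := by
  have hu := geom_bij _ d p hp h
  obtain ⟨ha, h0⟩ := iter_analytic hf.1 hf.2 d
  have hd : fderiv ℂ (f^[d]) 0 = (fderiv ℂ f 0) ^ d :=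
    (HasStrictFDerivAt.iterate hf.1.hasStrictFDerivAt hf.2 d).hasFDerivAt.fderiv
  have hb := (Module.End.isUnit_iff _).1 hu
  rw [Function.iterate_mul]
  refine iter_index ha h0 p (LinearEquiv.ofBijective _ hb).toContinuousLinearEquiv ?_
  intro x
  rw [hd]
  simp only [LinearEquiv.coe_toContinuousLinearEquiv', LinearEquiv.ofBijective_apply,
    LinearMap.sum_apply]
  refine Finset.sum_congr rfl fun j _ => ?_
  rw [← pow_mul, ← pow_mul, ← ContinuousLinearMap.toLinearMap_pow]
  rfl

lemma exists_prime (A : Module.End ℂ (Cn 2)) (m : ℕ) (hm : 0 < m)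
    (hno : ¬ ∃ x : Cn 2, ExactPeriodicPt (fun y => A y) m x) :
    ∃ p, p.Prime ∧ p ∣ m ∧ ∀ l : ℂ, A.HasEigenvalue l → l ^ m = 1 → l ^ (m / p) = 1 := by
  by_contra! hc
  apply hno
  have hfin : {l : ℂ | A.HasEigenvalue l}.Finite := Module.End.finite_hasEigenvalue A
  set S : Finset ℂ := hfin.toFinset.filter (fun l => l ^ m = 1) with hS
  have hmem : ∀ l, l ∈ S ↔ A.HasEigenvalue l ∧ l ^ m = 1 := by intro l; simp [hS]
  have hv : ∀ l : S, ∃ v, A.HasEigenvector l v := fun l => ((hmem l).1 l.2).1.exists_hasEigenvector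
  choose v hv using hv
  have hli : LinearIndependent ℂ v :=
    Module.End.eigenvectors_linearIndependent' A (fun l : S => (l : ℂ)) Subtype.val_injective v hv
  have hit : ∀ j, (fun y => A y)^[j] (∑ l, v l) = ∑ l : S, ((l : ℂ) ^ j) • v l := by
    intro j
    have : (fun y => A y)^[j] (∑ l, v l) = (A ^ j) (∑ l, v l) := by
      rw [Module.End.pow_apply]
    rw [this, map_sum]
    exact Finset.sum_congr rfl fun l _ => (hv l).pow_apply j
  refine ⟨∑ l, v l, ?_, ?_⟩
  · rw [hit]
    exact Finset.sum_congr rfl fun l _ => by rw [((hmem l).1 l.2).2, one_smul]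
  · intro j hj hjm he
    rw [hit] at he
    have h1 : ∀ l : S, (l : ℂ) ^ j = 1 := by
      have h2 : ∑ l : S, ((l : ℂ) ^ j - 1) • v l = 0 := by
        simp only [sub_smul, one_smul, Finset.sum_sub_distrib, he, sub_self]
      intro l
      exact sub_eq_zero.1 (Fintype.linearIndependent_iff.1 hli _ h2 l)
    have hg : Nat.gcd j m ∣ m := Nat.gcd_dvd_right _ _
    obtain ⟨t, ht⟩ := hg
    have ht1 : t ≠ 1 := by
      rintro rfl
      have := Nat.gcd_le_left m hj
      omega
    obtain ⟨p, hp, s, rfl⟩ := Nat.exists_prime_and_dvd ht1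
    obtain ⟨l, hl, hlm, hln⟩ := hc p hp ⟨Nat.gcd j m * s, ht.trans (by ring)⟩
    apply hln
    have hd : orderOf l ∣ Nat.gcd j m :=
      Nat.dvd_gcd (orderOf_dvd_of_pow_eq_one (h1 ⟨l, (hmem l).2 ⟨hl, hlm⟩⟩))
        (orderOf_dvd_of_pow_eq_one hlm)
    have hq : m / p = Nat.gcd j m * s :=
      Nat.div_eq_of_eq_mul_right hp.pos (by rw [← mul_assoc, mul_comm p, mul_assoc]; exact ht)
    rw [hq]
    exact orderOf_dvd_iff_pow_eq_one.1 (hd.mul_right s)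

lemma dold_zero {f : Cn 2 → Cn 2} (hf : IsGerm f) (m : ℕ) (hm : 0 < m)
    (hno : ¬ ∃ x : Cn 2, ExactPeriodicPt (fun y => fderiv ℂ f 0 y) m x) :
    doldIndex f m = 0 := by
  obtain ⟨p, hp, hpm, hl⟩ := exists_prime ((fderiv ℂ f 0).toLinearMap) m hm hno
  have hpf : p ∈ m.primeFactors := Nat.mem_primeFactors.2 ⟨hp, hpm, hm.ne'⟩
  unfold doldIndex
  rw [← Finset.insert_erase hpf, Finset.sum_powerset_insert (Finset.notMem_erase _ _),
    ← Finset.sum_add_distrib]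
  refine Finset.sum_eq_zero fun τ hτ => ?_
  rw [Finset.mem_powerset] at hτ
  have hpτ : p ∉ τ := fun h => Finset.notMem_erase _ _ (hτ h)
  rw [Finset.card_insert_of_notMem hpτ, Finset.prod_insert hpτ]
  set T := ∏ q ∈ τ, q with hT
  have hcop : Nat.Coprime p T := Nat.Coprime.prod_right fun q hq => by
    have := Finset.mem_erase.1 (hτ hq)
    exact (Nat.coprime_primes hp (Nat.prime_of_mem_primeFactors this.2)).2 (Ne.symm this.1)
  have hTm : T ∣ m := (Finset.prod_dvd_prod_of_subset _ _ _
    (hτ.trans (Finset.erase_subset _ _))).trans (Nat.prod_primeFactors_dvd m)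
  obtain ⟨n, hn⟩ := hcop.mul_dvd_of_dvd_of_dvd hpm hTm
  have hT0 : 0 < T := Nat.pos_of_dvd_of_pos hTm hm
  have e1 : m / T = n * p :=
    Nat.div_eq_of_eq_mul_right hT0 (by rw [hn]; ring)
  have e2 : m / (p * T) = n :=
    Nat.div_eq_of_eq_mul_right (Nat.mul_pos hp.pos hT0) hn
  have e3 : m / p = T * n :=
    Nat.div_eq_of_eq_mul_right hp.pos (by rw [hn]; ring)
  rw [e1, e2, index_eq hf n p hp.pos, pow_succ]
  · ring
  · intro l hle hlp
    have h1 : l ^ m = 1 := by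
      rw [hn, show p * T * n = n * p * T by ring, pow_mul, hlp, one_pow]
    have h2 := hl l hle h1
    rw [e3] at h2
    have h3 : orderOf l ∣ Nat.gcd (p * n) (T * n) :=
      Nat.dvd_gcd (orderOf_dvd_of_pow_eq_one (by rwa [mul_comm])) (orderOf_dvd_of_pow_eq_one h2)
    rw [Nat.gcd_mul_right, hcop, one_mul] at h3
    exact orderOf_dvd_iff_pow_eq_one.1 h3

open ArithmeticFunction in
lemma dold_moebius (f : Cn 2 → Cn 2) (m : ℕ) (hm : 0 < m) :
    ∑ x ∈ m.divisorsAntidiagonal, ((moebius x.1 : ℤ) : ℤ) * (fixedPointIndex (f^[x.2]) 0 : ℤ)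
      = doldIndex f m := by
  rw [Nat.sum_divisorsAntidiagonal (fun a b => (moebius a : ℤ) * (fixedPointIndex (f^[b]) 0 : ℤ))]
  rw [← Finset.sum_filter_of_ne (p := Squarefree) (fun x _ hx => by
    by_contra h
    exact hx (by rw [moebius_eq_zero_of_not_squarefree h, zero_mul]))]
  unfold doldIndex
  refine Finset.sum_bij' (fun d _ => d.primeFactors) (fun τ _ => ∏ p ∈ τ, p) ?_ ?_ ?_ ?_ ?_
  · intro d hd
    simp only [Finset.mem_filter, Nat.mem_divisors] at hd
    exact Finset.mem_powerset.2 (Nat.primeFactors_mono hd.1.1 hm.ne')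
  · intro τ hτ
    rw [Finset.mem_powerset] at hτ
    have hdv : ∏ p ∈ τ, p ∣ ∏ p ∈ m.primeFactors, p := Finset.prod_dvd_prod_of_subset _ _ _ hτ
    simp only [Finset.mem_filter, Nat.mem_divisors]
    refine ⟨⟨hdv.trans (Nat.prod_primeFactors_dvd m), hm.ne'⟩, ?_⟩
    refine Finset.squarefree_prod_of_pairwise_isCoprime ?_ ?_
    · intro a ha b hb hab
      exact Nat.coprime_iff_isRelPrime.1 ((Nat.coprime_primes (Nat.prime_of_mem_primeFactors (hτ ha))
        (Nat.prime_of_mem_primeFactors (hτ hb))).2 hab)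
    · intro a ha
      exact (Nat.prime_of_mem_primeFactors (hτ ha)).prime.squarefree
  · intro d hd
    simp only [Finset.mem_filter] at hd
    exact Nat.prod_primeFactors_of_squarefree hd.2
  · intro τ hτ
    rw [Finset.mem_powerset] at hτ
    exact Nat.primeFactors_prod fun p hp => Nat.prime_of_mem_primeFactors (hτ hp)
  · intro d hd
    simp only [Finset.mem_filter] at hd
    rw [Nat.prod_primeFactors_of_squarefree hd.2, moebius_apply_of_squarefree hd.2,
      ← (cardDistinctFactors_eq_cardFactors_iff_squarefree (by
        rintro rfl; exact not_squarefree_zero hd.2)).2 hd.2]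
    rfl

lemma sum_dold (f : Cn 2 → Cn 2) (M : ℕ) (hM : 0 < M) :
    ∑ m ∈ M.divisors, doldIndex f m = (fixedPointIndex (f^[M]) 0 : ℤ) := by
  have := (ArithmeticFunction.sum_eq_iff_sum_mul_moebius_eq (R := ℤ) (f := doldIndex f)
    (g := fun k => (fixedPointIndex (f^[k]) 0 : ℤ))).2 (fun n hn => by
      simpa using dold_moebius f n hn)
  exact this M hM

/-- (i) If the linear part of `f` at `0` has no periodic point of exact period `m` and
`0` is an isolated fixed point of `f^m`, then `P_m(f,0) = 0`. (ii) If `0` is an isolated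
fixed point of `f^M`, then `μ_{f^M}(0)` is the sum of `P_m(f,0)` over the divisors `m`
of `M` for which the linear part of `f` at `0` has a periodic point of exact period `m`. -/
theorem doldIndex_vanishing_and_sum (f : Cn 2 → Cn 2) (hf : IsGerm f) :
    (∀ m : ℕ, 0 < m →
        ¬(∃ x : Cn 2, ExactPeriodicPt (fun y => fderiv ℂ f 0 y) m x) →
        IsolatedFixedPtAt0 (f^[m]) → doldIndex f m = 0) ∧
    (∀ M : ℕ, 0 < M → IsolatedFixedPtAt0 (f^[M]) →
      (fixedPointIndex (f^[M]) 0 : ℤ) =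
        ∑ m ∈ M.divisors.filter
            (fun m => ∃ x : Cn 2, ExactPeriodicPt (fun y => fderiv ℂ f 0 y) m x),
          doldIndex f m) := by
  refine ⟨fun m hm hno _ => dold_zero hf m hm hno, fun M hM _ => ?_⟩
  rw [← sum_dold f M hM]
  refine (Finset.sum_filter_of_ne fun m hm hne => ?_).symm
  by_contra h
  exact hne (dold_zero hf m (Nat.pos_of_mem_divisors hm) h)

end ZhangPaper
end
end

section
/- Let m > 1 be a positive integer and let f ∈ 𝒪(ℂ²,0,0). Assume that the origin is an isolated fixed point of f and that, for each eigenvalue λ of Df(0), either λ = 1 or λ^m ≠ 1. Then the origin is an isolated fixed point of f^m and μ_f(0) = μ_{f^m}(0). -/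
open Metric Set Filter Topology Polynomial Asymptotics
open scoped Classical

noncomputable section

namespace ZhangPaper

variable {n : ℕ}

/-- Maximum-principle lemma on a compact family over the disc of radius `2`. -/
theorem family_max_principle {Y : Type*} [TopologicalSpace Y] [T2Space Y] (Z : Set (ℂ × Y))
    (hZ : IsCompact Z) (v : ℂ × Y → ℝ) (hv : ContinuousOn v Z) (hZ2 : ∀ p ∈ Z, ‖p.1‖ ≤ 2)
    (hv0 : ∀ p, 0 ≤ v p)
    (hbr : ∀ p ∈ Z, ‖p.1‖ < 2 → 0 < v p → ∃ φ : ℂ → ℂ,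
      (∀ᶠ s in 𝓝 p.1, DifferentiableAt ℂ φ s) ∧ ‖φ p.1‖ = v p ∧
      ∀ᶠ s in 𝓝 p.1, ∃ y, (s, y) ∈ Z ∧ ‖φ s‖ ≤ v (s, y))
    (h0 : ∀ᶠ s in 𝓝 (0 : ℂ), ∀ y, (s, y) ∈ Z → v (s, y) = 0)
    (y1 : Y) (h1 : ((1 : ℂ), y1) ∈ Z) : v (1, y1) = 0 := by
  by_contra hne
  have ha : 0 < v (1, y1) := lt_of_le_of_ne (hv0 _) (Ne.symm hne)
  obtain ⟨η, hη, hη0⟩ := Metric.eventually_nhds_iff.1 h0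
  have hη0' : ∀ p ∈ Z, ‖p.1‖ < η → v p = 0 := fun p hp hpn =>
    hη0 (by simpa using hpn) p.2 hp
  obtain ⟨pM, hpM, hMax⟩ := hZ.exists_isMaxOn ⟨_, h1⟩ hv
  -- choose the exponent
  obtain ⟨N, hN⟩ : ∃ N : ℕ, v pM / 2 ^ N < v (1, y1) := by
    obtain ⟨N, hN⟩ := pow_unbounded_of_one_lt (v pM / v (1, y1)) (one_lt_two : (1 : ℝ) < 2)
    refine ⟨N, ?_⟩
    rw [div_lt_iff₀ (by positivity)]
    rw [div_lt_iff₀ ha] at hN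
    linarith
  set K : Set (ℂ × Y) := Z ∩ {p | η / 2 ≤ ‖p.1‖} with hK
  have hKc : IsCompact K := hZ.inter_right (isClosed_le continuous_const (by fun_prop))
  have hpos : ∀ p ∈ K, 0 < ‖p.1‖ := fun p hp => lt_of_lt_of_le (by positivity) hp.2
  set w : ℂ × Y → ℝ := fun p => v p / ‖p.1‖ ^ N with hw
  have hwc : ContinuousOn w K := by
    apply ContinuousOn.div (hv.mono inter_subset_left) (by fun_prop)
    intro p hp
    exact pow_ne_zero _ (hpos p hp).ne'
  have h1K : ((1 : ℂ), y1) ∈ K := by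
    refine ⟨h1, ?_⟩
    by_contra hlt
    simp only [mem_ofPred_eq, not_le] at hlt
    exact hne (hη0' _ h1 (by simp at hlt ⊢; linarith))
  obtain ⟨p0, hp0, hmax0⟩ := hKc.exists_isMaxOn ⟨_, h1K⟩ hwc
  set K' : Set (ℂ × Y) := K ∩ w ⁻¹' {w p0} with hK'
  have hK'c : IsCompact K' :=
    hKc.of_isClosed_subset (hwc.preimage_isClosed_of_isClosed hKc.isClosed isClosed_singleton)
      inter_subset_left
  obtain ⟨p, hp, hpmax⟩ := hK'c.exists_isMaxOn ⟨p0, hp0, rfl⟩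
    (f := fun p => ‖p.1‖) (by fun_prop)
  have hwp : ∀ z ∈ K, w z ≤ w p := by
    intro z hz
    have : w p = w p0 := hp.2
    rw [this]; exact hmax0 hz
  have hw1 : v (1, y1) ≤ w p := by
    have := hwp _ h1K
    simpa [hw] using this
  have hppos := hpos p hp.1
  have hvp : 0 < v p := by
    have h3 : 0 < w p := lt_of_lt_of_le ha hw1
    have h4 : v p = w p * ‖p.1‖ ^ N := by
      simp only [hw]; field_simp
    rw [h4]; positivity
  have hηp : η ≤ ‖p.1‖ := by
    by_contra hlt
    exact hvp.ne' (hη0' p hp.1.1 (not_le.1 hlt))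
  have hp2 : ‖p.1‖ < 2 := by
    rcases lt_or_eq_of_le (hZ2 p hp.1.1) with h | h
    · exact h
    · exfalso
      have : w p ≤ v pM / 2 ^ N := by
        simp only [hw, h]
        gcongr
        exact hMax hp.1.1
      linarith
  obtain ⟨φ, hφd, hφp, hφ⟩ := hbr p hp.1.1 hp2 hvp
  set ψ : ℂ → ℂ := fun s => φ s / s ^ N with hψ
  have hpne : p.1 ≠ 0 := norm_pos_iff.1 hppos
  have hne0 : ∀ᶠ s in 𝓝 p.1, s ≠ 0 := isOpen_ne.mem_nhds hpne
  have hψd : ∀ᶠ s in 𝓝 p.1, DifferentiableAt ℂ ψ s := by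
    filter_upwards [hφd, hne0] with s hs hs0
    exact hs.div (by fun_prop) (pow_ne_zero _ hs0)
  have hψp : ‖ψ p.1‖ = w p := by simp [hψ, hw, hφp]
  have hbig : ∀ᶠ s in 𝓝 p.1, η / 2 < ‖s‖ :=
    (isOpen_lt continuous_const continuous_norm).mem_nhds (by
      simp only [mem_ofPred_eq]; linarith)
  have hψle : ∀ᶠ s in 𝓝 p.1, ∃ y, (s, y) ∈ K ∧ ‖ψ s‖ ≤ w (s, y) := by
    filter_upwards [hφ, hbig] with s hs hsb
    obtain ⟨y, hy, hle⟩ := hs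
    refine ⟨y, ⟨hy, hsb.le⟩, ?_⟩
    simp only [hψ, hw, norm_div, norm_pow]
    gcongr
  have hloc : IsLocalMax (norm ∘ ψ) p.1 := by
    filter_upwards [hψle] with s hs
    obtain ⟨y, hy, hle⟩ := hs
    simp only [Function.comp, hψp]
    exact hle.trans (hwp _ hy)
  have hconst := Complex.eventually_eq_of_isLocalMax_norm hψd hloc
  have hle : ∀ᶠ s in 𝓝 p.1, ‖s‖ ≤ ‖p.1‖ := by
    filter_upwards [hψle, hconst] with s hs hc
    obtain ⟨y, hy, hle⟩ := hs
    have h5 : w (s, y) = w p := le_antisymm (hwp _ hy) (by rw [← hψp, ← hc]; exact hle)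
    have h6 : (s, y) ∈ K' := ⟨hy, by
      have : w p = w p0 := hp.2
      simp [h5, this]⟩
    exact hpmax h6
  have ht : Tendsto (fun t : ℝ => ((1 + t : ℝ) : ℂ) * p.1) (𝓝[>] 0) (𝓝 p.1) := by
    have : Continuous (fun t : ℝ => ((1 + t : ℝ) : ℂ) * p.1) := by fun_prop
    have h7 := this.tendsto 0
    simp only [add_zero, Complex.ofReal_one, one_mul] at h7
    exact h7.mono_left nhdsWithin_le_nhds
  obtain ⟨t, ht1, ht2⟩ := ((ht.eventually hle).and self_mem_nhdsWithin).exists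
  have ht2' : (0 : ℝ) < t := ht2
  rw [norm_mul, Complex.norm_real, Real.norm_of_nonneg (by linarith)] at ht1
  nlinarith

/-- Jacobian determinant in the second variable. -/
def jac {n : ℕ} (F : ℂ × Cn n → Cn n) (p : ℂ × Cn n) : ℂ :=
  Matrix.det (Matrix.of fun i j : Fin n => fderiv ℂ F p (0, Pi.single j 1) i)

theorem jac_differentiableAt {n : ℕ} {F : ℂ × Cn n → Cn n} {p : ℂ × Cn n}
    (hF : AnalyticAt ℂ F p) : DifferentiableAt ℂ (jac F) p := by
  unfold jac
  simp only [Matrix.det_apply, Matrix.of_apply]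
  have h1 : DifferentiableAt ℂ (fderiv ℂ F) p := hF.fderiv.differentiableAt
  have h2 : ∀ i j : Fin n, DifferentiableAt ℂ
      (fun p => fderiv ℂ F p ((0 : ℂ), (Pi.single j 1 : Cn n)) i) p := by
    intro i j
    have h3 : DifferentiableAt ℂ (fun p => fderiv ℂ F p ((0 : ℂ), (Pi.single j 1 : Cn n))) p :=
      h1.clm_apply (differentiableAt_const _)
    exact (differentiableAt_pi.1 h3) i
  refine DifferentiableAt.fun_sum fun σ _ => ?_
  have h4 : DifferentiableAt ℂ
      (fun p => ∏ i, fderiv ℂ F p ((0 : ℂ), (Pi.single i 1 : Cn n)) (σ i)) p :=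
    (HasFDerivAt.finsetProd fun i _ => (h2 (σ i) i).hasFDerivAt).differentiableAt
  have h5 := h4.const_smul ((Equiv.Perm.sign σ : ℤ) : ℂ)
  refine h5.congr_of_eventuallyEq (Eventually.of_forall fun p => ?_)
  simp [Units.smul_def]

theorem jac_ne_zero_iff {n : ℕ} {F : ℂ × Cn n → Cn n} {p : ℂ × Cn n} :
    jac F p ≠ 0 ↔ (fderiv ℂ F p ∘L .inr ℂ ℂ (Cn n)).IsInvertible := by
  set L := fderiv ℂ F p ∘L .inr ℂ ℂ (Cn n) with hL
  have h1 : jac F p = LinearMap.det (L : Cn n →ₗ[ℂ] Cn n) := by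
    rw [← LinearMap.det_toMatrix']
    unfold jac
    congr 1
  rw [h1, ← isUnit_iff_ne_zero]
  constructor
  · intro h
    exact ⟨(LinearMap.equivOfIsUnitDet h).toContinuousLinearEquiv, by ext; simp⟩
  · rintro ⟨e, he⟩
    rw [← he]
    exact (e.toLinearEquiv.isUnit_det')

theorem isInvertible_iff_bijective {n : ℕ} {L : Cn n →L[ℂ] Cn n} :
    L.IsInvertible ↔ Function.Bijective L := by
  constructor
  · intro h; exact h.bijective
  · intro h
    exact ⟨(LinearEquiv.ofBijective (L : Cn n →ₗ[ℂ] Cn n) h).toContinuousLinearEquiv, by ext; simp⟩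

theorem fderiv_slice {n : ℕ} {F : ℂ × Cn n → Cn n} {s : ℂ} {x : Cn n}
    (hF : AnalyticAt ℂ F (s, x)) :
    fderiv ℂ (fun x => F (s, x)) x = fderiv ℂ F (s, x) ∘L .inr ℂ ℂ (Cn n) := by
  have h := hF.differentiableAt.hasFDerivAt
  have h2 : HasFDerivAt (fun x : Cn n => (s, x)) (.inr ℂ ℂ (Cn n)) x := hasFDerivAt_prodMk_right s x
  exact (h.comp x h2).fderiv

/-- Weight function on `k`-tuples of points of a fibre. -/
def wt {n k : ℕ} (F : ℂ × Cn n → Cn n) (p : ℂ × (Fin k → Cn n)) : ℝ :=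
  (∏ i, ‖jac F (p.1, p.2 i)‖) *
    ∏ ij ∈ (Finset.univ : Finset (Fin k)).offDiag, ‖p.2 ij.1 - p.2 ij.2‖

theorem wt_branch {n k : ℕ} (F : ℂ × Cn n → Cn n) (r : ℝ)
    (hF : AnalyticOnNhd ℂ F (closedBall 0 2 ×ˢ closedBall 0 r))
    (hne : ∀ s ∈ closedBall (0 : ℂ) 2, ∀ x : Cn n, ‖x‖ = r → F (s, x) ≠ 0)
    (s0 : ℂ) (hs0 : ‖s0‖ < 2) (y0 : Fin k → Cn n)
    (hy0 : ∀ i, y0 i ∈ closedBall 0 r ∧ F (s0, y0 i) = 0) (hpos : 0 < wt F (s0, y0)) :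
    ∃ φ : ℂ → ℂ, (∀ᶠ s in 𝓝 s0, DifferentiableAt ℂ φ s) ∧ ‖φ s0‖ = wt F (s0, y0) ∧
      ∀ᶠ s in 𝓝 s0, ∃ y : Fin k → Cn n, (∀ i, y i ∈ closedBall 0 r ∧ F (s, y i) = 0) ∧
        ‖φ s‖ ≤ wt F (s, y) := by
  have hs0' : s0 ∈ closedBall (0 : ℂ) 2 := by simpa using hs0.le
  have hJ : ∀ i, jac F (s0, y0 i) ≠ 0 := by
    intro i hi
    apply hpos.ne'
    unfold wt
    rw [Finset.prod_eq_zero (Finset.mem_univ i) (by simp [hi]), zero_mul]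
  have hlt : ∀ i, y0 i ∈ ball (0 : Cn n) r := by
    intro i
    have h1 := (hy0 i).1
    rw [mem_closedBall_zero_iff] at h1
    rw [mem_ball_zero_iff]
    exact lt_of_le_of_ne h1 fun h => hne s0 hs0' _ h (hy0 i).2
  have hbr : ∀ i, ∃ x : ℂ → Cn n, x s0 = y0 i ∧ (∀ᶠ s in 𝓝 s0, DifferentiableAt ℂ x s) ∧
      (∀ᶠ s in 𝓝 s0, F (s, x s) = 0) ∧ (∀ᶠ s in 𝓝 s0, x s ∈ ball (0 : Cn n) r) := by
    intro i
    have hA : AnalyticAt ℂ F (s0, y0 i) := hF _ ⟨hs0', (hy0 i).1⟩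
    have hC : ContDiffAt ℂ 1 F (s0, y0 i) := hA.contDiffAt
    have hI := jac_ne_zero_iff.1 (hJ i)
    refine ⟨hC.implicitFunction one_ne_zero hI, hC.implicitFunction_apply_self one_ne_zero hI,
      ?_, ?_, ?_⟩
    · have h2 := hC.contDiffAt_implicitFunction one_ne_zero hI
      have h3 := h2.eventually (by simp)
      exact h3.mono fun s hs => hs.differentiableAt one_ne_zero
    · have h2 := hC.eventually_apply_implicitFunction one_ne_zero hI
      simpa [(hy0 i).2] using h2
    · have h2 := (hC.contDiffAt_implicitFunction one_ne_zero hI).continuousAt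
      apply h2.eventually_mem
      rw [hC.implicitFunction_apply_self one_ne_zero hI]
      exact isOpen_ball.mem_nhds (hlt i)
  choose x hx0 hxd hxF hxb using hbr
  have hdual : ∀ ij : Fin k × Fin k, ∃ g : StrongDual ℂ (Cn n), ‖g‖ ≤ 1 ∧
      g (y0 ij.1 - y0 ij.2) = ‖y0 ij.1 - y0 ij.2‖ := fun ij => exists_dual_vector'' ℂ _
  choose g hg1 hg2 using hdual
  have hxd' : ∀ᶠ s in 𝓝 s0, ∀ i, DifferentiableAt ℂ (x i) s := eventually_all.2 hxd
  have hxF' : ∀ᶠ s in 𝓝 s0, ∀ i, F (s, x i s) = 0 := eventually_all.2 hxF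
  have hxb' : ∀ᶠ s in 𝓝 s0, ∀ i, x i s ∈ ball (0 : Cn n) r := eventually_all.2 hxb
  have hsb : ∀ᶠ s in 𝓝 s0, s ∈ ball (0 : ℂ) 2 := isOpen_ball.mem_nhds (by simpa using hs0)
  refine ⟨fun s => (∏ i, jac F (s, x i s)) *
    ∏ ij ∈ (Finset.univ : Finset (Fin k)).offDiag, g ij (x ij.1 s - x ij.2 s), ?_, ?_, ?_⟩
  · filter_upwards [hxd', hxb', hsb] with s h1 h2 h3
    apply DifferentiableAt.mul
    · refine DifferentiableAt.fun_finsetProd fun i _ => ?_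
      have hA : AnalyticAt ℂ F (s, x i s) :=
        hF _ ⟨ball_subset_closedBall h3, ball_subset_closedBall (h2 i)⟩
      exact DifferentiableAt.comp s (f := fun s => (s, x i s)) (jac_differentiableAt hA)
        (differentiableAt_id.prodMk (h1 i))
    · refine DifferentiableAt.fun_finsetProd fun ij _ => ?_
      exact (g ij).differentiableAt.comp s ((h1 _).sub (h1 _))
  · simp only [wt, norm_mul, norm_prod, hx0, hg2]
    simp
  · filter_upwards [hxF', hxb'] with s h1 h2
    refine ⟨fun i => x i s, fun i => ⟨ball_subset_closedBall (h2 i), h1 i⟩, ?_⟩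
    simp only [wt, norm_mul, norm_prod]
    gcongr with ij _
    calc ‖g ij (x ij.1 s - x ij.2 s)‖ ≤ ‖g ij‖ * ‖x ij.1 s - x ij.2 s‖ := (g ij).le_opNorm _
      _ ≤ 1 * ‖x ij.1 s - x ij.2 s‖ := by gcongr; exact hg1 ij
      _ = _ := one_mul _

theorem exists_zeros_of_homotopy {n k : ℕ} (F : ℂ × Cn n → Cn n) (r : ℝ)
    (hF : AnalyticOnNhd ℂ F (closedBall 0 2 ×ˢ closedBall 0 r))
    (hne : ∀ s ∈ closedBall (0 : ℂ) 2, ∀ x : Cn n, ‖x‖ = r → F (s, x) ≠ 0)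
    (h0 : ∀ x ∈ ball (0 : Cn n) r, F (0, x) = 0 → jac F (0, x) ≠ 0)
    (h1 : ∀ x ∈ ball (0 : Cn n) r, F (1, x) = 0 → jac F (1, x) ≠ 0)
    (e : Fin k → Cn n) (hinj : Function.Injective e)
    (he : ∀ i, e i ∈ ball 0 r ∧ F (1, e i) = 0) :
    ∃ e' : Fin k → Cn n, Function.Injective e' ∧ ∀ i, e' i ∈ ball 0 r ∧ F (0, e' i) = 0 := by
  by_contra hcon
  push Not at hcon
  set K : Set (Fin k → Cn n) := Set.univ.pi fun _ => closedBall 0 r with hK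
  have hKc : IsCompact K := isCompact_univ_pi fun _ => isCompact_closedBall _ _
  have hBK : IsCompact (closedBall (0 : ℂ) 2 ×ˢ K) := (isCompact_closedBall _ _).prod hKc
  set Z : Set (ℂ × (Fin k → Cn n)) := (closedBall (0 : ℂ) 2 ×ˢ K) ∩
    (fun p i => F (p.1, p.2 i)) ⁻¹' {0} with hZ
  have hmaps : ∀ i : Fin k, MapsTo (fun p : ℂ × (Fin k → Cn n) => (p.1, p.2 i))
      (closedBall (0 : ℂ) 2 ×ˢ K) (closedBall 0 2 ×ˢ closedBall 0 r) :=
    fun i p hp => ⟨hp.1, hp.2 i (mem_univ i)⟩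
  have hcont : ContinuousOn (fun (p : ℂ × (Fin k → Cn n)) i => F (p.1, p.2 i))
      (closedBall (0 : ℂ) 2 ×ˢ K) := by
    refine continuousOn_pi.2 fun i => ?_
    exact hF.continuousOn.comp (by fun_prop) (hmaps i)
  have hZc : IsCompact Z := hBK.of_isClosed_subset
    (hcont.preimage_isClosed_of_isClosed hBK.isClosed isClosed_singleton) inter_subset_left
  have hmem : ∀ (s : ℂ) (y : Fin k → Cn n), (s, y) ∈ Z ↔
      ‖s‖ ≤ 2 ∧ ∀ i, y i ∈ closedBall 0 r ∧ F (s, y i) = 0 := by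
    intro s y
    simp only [hZ, hK, mem_inter_iff, mem_prod, mem_closedBall_zero_iff, mem_univ_pi, mem_preimage,
      mem_singleton_iff, funext_iff, Pi.zero_apply]
    constructor
    · rintro ⟨⟨a, b⟩, c⟩; exact ⟨a, fun i => ⟨b i, c i⟩⟩
    · rintro ⟨a, b⟩; exact ⟨⟨a, fun i => (b i).1⟩, fun i => (b i).2⟩
  have hwc : ContinuousOn (wt F : ℂ × (Fin k → Cn n) → ℝ) Z := by
    have hj : ∀ i : Fin k, ContinuousOn (fun p : ℂ × (Fin k → Cn n) => jac F (p.1, p.2 i)) Z := by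
      intro i
      have : ContinuousOn (jac F) (closedBall 0 2 ×ˢ closedBall 0 r) := fun p hp =>
        (jac_differentiableAt (hF p hp)).continuousAt.continuousWithinAt
      exact this.comp (by fun_prop) ((hmaps i).mono_left inter_subset_left)
    unfold wt
    apply ContinuousOn.mul
    · exact continuousOn_finsetProd _ fun i _ => (hj i).norm
    · fun_prop
  have hwpos : 0 < wt F (1, e) := by
    unfold wt
    apply mul_pos
    · exact Finset.prod_pos fun i _ => norm_pos_iff.2 (h1 _ (he i).1 (he i).2)
    · refine Finset.prod_pos fun ij hij => norm_pos_iff.2 (sub_ne_zero.2 fun h => ?_)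
      exact (Finset.mem_offDiag.1 hij).2.2 (hinj h)
  refine hwpos.ne' (family_max_principle Z hZc (wt F) hwc ?_ ?_ ?_ ?_ e ?_)
  · rintro ⟨s, y⟩ hp
    exact ((hmem s y).1 hp).1
  · intro p
    unfold wt
    positivity
  · rintro ⟨s, y⟩ hp hs hpos
    obtain ⟨φ, a, b, c⟩ := wt_branch F r hF hne s hs y ((hmem s y).1 hp).2 hpos
    refine ⟨φ, a, b, ?_⟩
    have hsb : ∀ᶠ s' in 𝓝 s, s' ∈ ball (0 : ℂ) 2 := isOpen_ball.mem_nhds (by simpa using hs)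
    filter_upwards [c, hsb] with s' h hs'
    obtain ⟨y', h3, h4⟩ := h
    exact ⟨y', (hmem _ _).2 ⟨by simpa using (ball_subset_closedBall hs'), h3⟩, h4⟩
  · have key : ∀ᶠ s in 𝓝 (0 : ℂ), ∀ y ∈ K, (s, y) ∈ Z → wt F (s, y) = 0 := by
      refine hKc.eventually_forall_of_forall_eventually
        (P := fun s y => (s, y) ∈ Z → wt F (s, y) = 0) fun y hy => ?_
      by_cases hyZ : ((0 : ℂ), y) ∈ Z
      · have hyZ' := ((hmem _ _).1 hyZ).2
        have hlt : ∀ i, y i ∈ ball (0 : Cn n) r := by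
          intro i
          have h1 := (hyZ' i).1
          rw [mem_closedBall_zero_iff] at h1
          rw [mem_ball_zero_iff]
          exact lt_of_le_of_ne h1 fun h => hne 0 (by simp) _ h (hyZ' i).2
        have hni : ¬ Function.Injective y := fun hi => by
          obtain ⟨i, hi2⟩ := hcon y hi
          exact hi2 (hlt i) (hyZ' i).2
        simp only [Function.Injective, not_forall] at hni
        obtain ⟨i, j, hij, hne'⟩ := hni
        have hA : AnalyticAt ℂ F (0, y i) := hF _ ⟨by simp, (hyZ' i).1⟩
        have hC : ContDiffAt ℂ 1 F (0, y i) := hA.contDiffAt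
        have hI := jac_ne_zero_iff.1 (h0 _ (hlt i) (hyZ' i).2)
        have hev := hC.eventually_apply_eq_iff_implicitFunction one_ne_zero hI
        have hti : Tendsto (fun p : ℂ × (Fin k → Cn n) => (p.1, p.2 i)) (𝓝 (0, y))
            (𝓝 (0, y i)) := Continuous.tendsto (by fun_prop) _
        have htj : Tendsto (fun p : ℂ × (Fin k → Cn n) => (p.1, p.2 j)) (𝓝 (0, y))
            (𝓝 (0, y i)) := by
          rw [hij]; exact Continuous.tendsto (by fun_prop) _
        filter_upwards [hti.eventually hev, htj.eventually hev] with p hp1 hp2 hpZ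
        have hpZ' := ((hmem p.1 p.2).1 hpZ).2
        have e1 := hp1.1 (by rw [(hpZ' i).2, (hyZ' i).2])
        have e2 := hp2.1 (by rw [(hpZ' j).2, (hyZ' i).2])
        have e3 : p.2 i = p.2 j := e1.symm.trans e2
        unfold wt
        rw [Finset.prod_eq_zero (i := (i, j)) (s := (Finset.univ : Finset (Fin k)).offDiag)
          (by simp [hne']) (by simp [e3]), mul_zero]
      · have : ∀ᶠ p in 𝓝 ((0 : ℂ), y), p ∉ Z := hZc.isClosed.isOpen_compl.mem_nhds hyZ
        filter_upwards [this] with p hp hp2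
        exact absurd hp2 hp
    filter_upwards [key] with s hs y hy
    exact hs y hy.1.2 hy
  · exact (hmem _ _).2 ⟨by simp, fun i => ⟨ball_subset_closedBall (he i).1, (he i).2⟩⟩

theorem exists_zeros_of_linear_homotopy {n k : ℕ} (h g : Cn n → Cn n) (r : ℝ) (q q' : Cn n)
    (hh : AnalyticOnNhd ℂ h (closedBall 0 r)) (hg : AnalyticOnNhd ℂ g (closedBall 0 r))
    (hne : ∀ s : ℂ, ‖s‖ ≤ 2 → ∀ x : Cn n, ‖x‖ = r →
      h x + s • (g x - h x) ≠ q + s • (q' - q))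
    (hq : IsRegularValueOn h (ball 0 r) q) (hq' : IsRegularValueOn g (ball 0 r) q')
    (e : Fin k → Cn n) (hinj : Function.Injective e) (he : ∀ i, e i ∈ ball 0 r ∧ g (e i) = q') :
    ∃ e' : Fin k → Cn n, Function.Injective e' ∧ ∀ i, e' i ∈ ball 0 r ∧ h (e' i) = q := by
  set F : ℂ × Cn n → Cn n :=
    fun p => h p.2 + p.1 • (g p.2 - h p.2) - (q + p.1 • (q' - q)) with hFdef
  have hF : AnalyticOnNhd ℂ F (closedBall 0 2 ×ˢ closedBall 0 r) := by
    intro p hp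
    have a1 : AnalyticAt ℂ (fun p : ℂ × Cn n => h p.2) p := (hh p.2 hp.2).comp analyticAt_snd
    have a2 : AnalyticAt ℂ (fun p : ℂ × Cn n => g p.2) p := (hg p.2 hp.2).comp analyticAt_snd
    exact (a1.add (analyticAt_fst.smul (a2.sub a1))).sub
      (analyticAt_const.add (analyticAt_fst.smul analyticAt_const))
  have hF0 : ∀ x, F (0, x) = h x - q := fun x => by simp [hFdef]
  have hF1 : ∀ x, F (1, x) = g x - q' := fun x => by simp [hFdef]
  have hreg : ∀ (s : ℂ) (u : Cn n → Cn n) (c : Cn n), ‖s‖ ≤ 2 → (∀ x, F (s, x) = u x - c) →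
      IsRegularValueOn u (ball 0 r) c →
      ∀ x ∈ ball (0 : Cn n) r, F (s, x) = 0 → jac F (s, x) ≠ 0 := by
    intro s u c hs hFs hu x hx hx0
    rw [jac_ne_zero_iff, isInvertible_iff_bijective,
      ← fderiv_slice (hF (s, x) ⟨by simpa using hs, ball_subset_closedBall hx⟩)]
    have : (fun x => F (s, x)) = fun x => u x - c := funext hFs
    rw [this, fderiv_sub_const]
    exact hu x hx (sub_eq_zero.1 (by rw [← hFs]; exact hx0))
  obtain ⟨e', h1, h2⟩ := exists_zeros_of_homotopy F r hF
    (fun s hs x hx hz => hne s (by simpa using hs) x hx (sub_eq_zero.1 hz))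
    (hreg 0 h q (by simp) hF0 hq) (hreg 1 g q' (by simp) hF1 hq') e hinj
    (fun i => ⟨(he i).1, by rw [hF1, (he i).2, sub_self]⟩)
  exact ⟨e', h1, fun i => ⟨(h2 i).1, sub_eq_zero.1 (by rw [← hF0]; exact (h2 i).2)⟩⟩

theorem encard_le_of_tuples {α : Type*} (S T : Set α)
    (H : ∀ (k : ℕ) (e : Fin k → α), Function.Injective e → (∀ i, e i ∈ S) →
      ∃ e' : Fin k → α, Function.Injective e' ∧ ∀ i, e' i ∈ T) : S.encard ≤ T.encard := by
  rw [← ENat.forall_natCast_le_iff_le]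
  intro k hk
  obtain ⟨t, htS, htk⟩ := Set.exists_subset_encard_eq hk
  have hfin : t.Finite := Set.finite_of_encard_eq_coe htk
  have hcard : Nat.card t = k := by
    have h2 : t.ncard = k := by rw [Set.ncard, htk]; rfl
    simpa using h2
  have : Finite t := hfin
  let eq := Finite.equivFinOfCardEq hcard
  obtain ⟨e', h1, h2⟩ := H k (fun i => (eq.symm i : α))
    (Subtype.val_injective.comp eq.symm.injective) (fun i => htS (eq.symm i).2)
  have h3 : (Set.range e').encard = k := by
    rw [← Set.image_univ, h1.encard_image, Set.encard_univ]; simp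
  rw [← h3]
  exact Set.encard_le_encard (by rintro _ ⟨i, rfl⟩; exact h2 i)

theorem encard_eq_of_close {n : ℕ} (h g : Cn n → Cn n) (r c : ℝ) (q q' : Cn n)
    (hh : AnalyticOnNhd ℂ h (closedBall 0 r)) (hg : AnalyticOnNhd ℂ g (closedBall 0 r))
    (hc : ∀ x : Cn n, ‖x‖ = r → c ≤ ‖h x‖)
    (hgh : ∀ x : Cn n, ‖x‖ = r → ‖g x - h x‖ ≤ 1 / 4 * ‖h x‖)
    (hqc : ‖q‖ < c / 40) (hqc' : ‖q'‖ < c / 40)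
    (hq : IsRegularValueOn h (ball 0 r) q) (hq' : IsRegularValueOn g (ball 0 r) q') :
    {x ∈ ball 0 r | h x = q}.encard = {x ∈ ball 0 r | g x = q'}.encard := by
  have hne : ∀ s : ℂ, ‖s‖ ≤ 3 → ∀ x : Cn n, ‖x‖ = r →
      h x + s • (g x - h x) ≠ q + s • (q' - q) := by
    intro s hs x hx heq
    have h1 : h x = q + s • (q' - q) - s • (g x - h x) := by rw [← heq]; abel
    have h2 : ‖h x‖ ≤ ‖q‖ + 3 * (‖q'‖ + ‖q‖) + 3 * (1 / 4 * ‖h x‖) := by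
      calc ‖h x‖ = ‖q + s • (q' - q) - s • (g x - h x)‖ := by rw [← h1]
        _ ≤ ‖q + s • (q' - q)‖ + ‖s • (g x - h x)‖ := norm_sub_le _ _
        _ ≤ ‖q‖ + ‖s • (q' - q)‖ + ‖s • (g x - h x)‖ := by gcongr; exact norm_add_le _ _
        _ ≤ ‖q‖ + 3 * (‖q'‖ + ‖q‖) + 3 * (1 / 4 * ‖h x‖) := by
          rw [norm_smul, norm_smul]
          gcongr
          · exact norm_sub_le _ _
          · exact hgh x hx
    have := hc x hx
    have := norm_nonneg q
    linarith
  apply le_antisymm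
  · refine encard_le_of_tuples _ _ fun k e hinj he => ?_
    refine exists_zeros_of_linear_homotopy g h r q' q hg hh ?_ hq' hq e hinj he
    intro s hs x hx heq
    refine hne (1 - s) ?_ x hx ?_
    · calc ‖1 - s‖ ≤ ‖(1 : ℂ)‖ + ‖s‖ := norm_sub_le _ _
        _ ≤ 3 := by rw [norm_one]; linarith
    · have e1 : h x + (1 - s) • (g x - h x) = g x + s • (h x - g x) := by module
      have e2 : q + (1 - s) • (q' - q) = q' + s • (q - q') := by module
      rw [e1, e2, heq]
  · refine encard_le_of_tuples _ _ fun k e hinj he => ?_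
    exact exists_zeros_of_linear_homotopy h g r q q' hh hg
      (fun s hs => hne s (by linarith)) hq hq' e hinj he

/-- Small regular values exist (equidimensional Sard). -/
theorem exists_small_regular {n : ℕ} (g : Cn n → Cn n) (r : ℝ)
    (hg : AnalyticOnNhd ℂ g (closedBall 0 r)) (ε : ℝ) (hε : 0 < ε) :
    ∃ q : Cn n, ‖q‖ < ε ∧ IsRegularValueOn g (ball 0 r) q := by
  set s : Set (Cn n) := {x ∈ ball 0 r | ¬ Function.Bijective (fderiv ℂ g x)} with hs
  have h0 : MeasureTheory.volume (g '' s) = 0 := by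
    refine MeasureTheory.addHaar_image_eq_zero_of_det_fderivWithin_eq_zero MeasureTheory.volume
      (f' := fun x => (fderiv ℂ g x).restrictScalars ℝ) ?_ ?_
    · intro x hx
      exact ((hg x (ball_subset_closedBall hx.1)).differentiableAt.hasFDerivAt.restrictScalars
        ℝ).hasFDerivWithinAt
    · intro x hx
      by_contra hdet
      apply hx.2
      have hb := (LinearMap.equivOfIsUnitDet
        (f := ((fderiv ℂ g x).restrictScalars ℝ).toLinearMap)
        (isUnit_iff_ne_zero.2 hdet)).bijective
      have hcoe : ∀ v, LinearMap.equivOfIsUnitDet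
        (f := ((fderiv ℂ g x).restrictScalars ℝ).toLinearMap)
        (isUnit_iff_ne_zero.2 hdet) v = fderiv ℂ g x v := fun v => by simp
      rwa [show (fderiv ℂ g x : Cn n → Cn n) = _ from funext fun v => (hcoe v).symm]
  obtain ⟨q, hq, hqs⟩ : ∃ q ∈ ball (0 : Cn n) ε, q ∉ g '' s := by
    by_contra hcon
    push Not at hcon
    have h1 : MeasureTheory.volume (ball (0 : Cn n) ε) ≤ 0 := by
      rw [← h0]; exact MeasureTheory.measure_mono hcon
    exact absurd h1 (not_le.2 (Metric.measure_ball_pos _ _ hε))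
  refine ⟨q, by simpa using hq, fun x hx hxq => ?_⟩
  by_contra hb
  exact hqs ⟨x, ⟨hx, hb⟩, hxq⟩

theorem HasZeroOrder.transfer {n : ℕ} {h g : Cn n → Cn n} (B : Cn n ≃L[ℂ] Cn n)
    (hg : AnalyticAt ℂ g 0) (ho : (fun x => g x - B (h x)) =o[𝓝 0] h) {k : ℕ}
    (H : HasZeroOrder h 0 k) : HasZeroOrder g 0 k := by
  obtain ⟨r0, hr0, hh, h00, hiso, hdense, δ0, hδ0, hcount⟩ := H
  obtain ⟨C, hC, hBC⟩ : ∃ C > 0, ∀ y : Cn n, ‖y‖ ≤ C * ‖B y‖ := by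
    refine ⟨‖(B.symm : Cn n →L[ℂ] Cn n)‖ + 1, by positivity, fun y => ?_⟩
    have := (B.symm : Cn n →L[ℂ] Cn n).le_opNorm (B y)
    simp only [ContinuousLinearEquiv.coe_coe, ContinuousLinearEquiv.symm_apply_apply] at this
    nlinarith [norm_nonneg (B y)]
  have hclose : ∀ᶠ x in 𝓝 (0 : Cn n), ‖g x - B (h x)‖ ≤ 1 / 4 * ‖B (h x)‖ := by
    filter_upwards [ho.def (c := 1 / (4 * C)) (by positivity)] with x hx
    calc _ ≤ 1 / (4 * C) * ‖h x‖ := hx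
      _ ≤ 1 / (4 * C) * (C * ‖B (h x)‖) := by gcongr; exact hBC _
      _ = _ := by field_simp
  obtain ⟨r1, hr1, hr1'⟩ := Metric.eventually_nhds_iff_ball.1
    (hclose.and hg.eventually_analyticAt)
  set r := min r0 (r1 / 2) with hr
  have hrpos : 0 < r := by positivity
  have hrr0 : r ≤ r0 := min_le_left _ _
  have hball : ∀ x ∈ closedBall (0 : Cn n) r, x ∈ ball (0 : Cn n) r1 := fun x hx =>
    closedBall_subset_ball (lt_of_le_of_lt (min_le_right _ _) (by linarith)) hx
  have hcl : ∀ x ∈ closedBall (0 : Cn n) r, ‖g x - B (h x)‖ ≤ 1 / 4 * ‖B (h x)‖ :=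
    fun x hx => (hr1' x (hball x hx)).1
  have hga : AnalyticOnNhd ℂ g (closedBall 0 r) := fun x hx => (hr1' x (hball x hx)).2
  have hha : AnalyticOnNhd ℂ h (closedBall 0 r) := hh.mono (closedBall_subset_closedBall hrr0)
  have hBh : AnalyticOnNhd ℂ (fun x => B (h x)) (closedBall 0 r) := fun x hx =>
    ((B : Cn n →L[ℂ] Cn n).analyticAt _).comp (hha x hx)
  have hg0 : g 0 = 0 := by
    have := hcl 0 (by simp [hrpos.le])
    simpa [h00] using this
  refine ⟨r, hrpos, hga, hg0, ?_, exists_small_regular g r hga, ?_⟩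
  · intro x hx hgx
    have h1 := hcl x hx
    rw [hgx, zero_sub, norm_neg] at h1
    have h2 : ‖B (h x)‖ = 0 := by linarith [norm_nonneg (B (h x))]
    apply hiso x (closedBall_subset_closedBall hrr0 hx)
    have h3 := hBC (h x)
    rw [h2, mul_zero] at h3
    exact norm_le_zero_iff.1 h3
  · obtain ⟨c0, hc0, hc0'⟩ : ∃ c0, 0 < c0 ∧ ∀ x ∈ closedBall (0 : Cn n) r0 \ ball 0 r,
        c0 ≤ ‖h x‖ := by
      refine ((isCompact_closedBall _ _).diff isOpen_ball).exists_forall_le'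
        ((hh.continuousOn.mono sdiff_subset).norm) ?_
      intro x hx
      refine norm_pos_iff.2 fun h1 => hx.2 ?_
      rw [hiso x hx.1 h1]
      simpa using hrpos
    refine ⟨c0 / C / 40, by positivity, fun q' hq'n hq' => ?_⟩
    obtain ⟨q, hqn, hq⟩ := hdense (min δ0 (min c0 (c0 / C / 40 / (‖(B : Cn n →L[ℂ] Cn n)‖ + 1))))
      (by positivity)
    rw [lt_min_iff, lt_min_iff] at hqn
    have hk := hcount q hqn.1 hq
    have hset : {x ∈ ball (0 : Cn n) r0 | h x = q} = {x ∈ ball (0 : Cn n) r | B (h x) = B q} := by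
      ext x
      constructor
      · rintro ⟨hx, hxq⟩
        refine ⟨?_, by rw [hxq]⟩
        by_contra hx2
        have := hc0' x ⟨ball_subset_closedBall hx, hx2⟩
        rw [hxq] at this
        linarith [hqn.2.1]
      · rintro ⟨hx, hxq⟩
        exact ⟨ball_subset_ball hrr0 hx, B.injective hxq⟩
    rw [hset] at hk
    have hBq : IsRegularValueOn (fun x => B (h x)) (ball 0 r) (B q) := by
      intro x hx hxq
      have h1 := hq x (ball_subset_ball hrr0 hx) (B.injective hxq)
      have h2 : fderiv ℂ (fun x => B (h x)) x = (B : Cn n →L[ℂ] Cn n).comp (fderiv ℂ h x) :=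
        B.comp_fderiv
      rw [h2]
      exact B.bijective.comp h1
    have hBqn : ‖B q‖ < c0 / C / 40 := by
      have h1 := (B : Cn n →L[ℂ] Cn n).le_opNorm q
      have h2 := hqn.2.2
      rw [lt_div_iff₀ (by positivity)] at h2
      simp only [ContinuousLinearEquiv.coe_coe] at h1
      nlinarith [norm_nonneg q]
    have hmain := encard_eq_of_close (fun x => B (h x)) g r (c0 / C) (B q) q' hBh hga
      (by
        intro x hx
        rw [div_le_iff₀ hC]
        have h1 := hc0' x ⟨by simpa [hx] using hrr0, by simp [hx]⟩
        linarith [hBC (h x)])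
      (fun x hx => hcl x (by simp [hx])) hBqn hq'n hBq hq'
    rw [Set.ncard, ← hmain]
    exact hk

theorem geom_sum_bijective {m : ℕ} (hm : 1 < m) {n : ℕ} (A : Cn n →L[ℂ] Cn n)
    (heig : ∀ lam : ℂ, Module.End.HasEigenvalue (A.toLinearMap) lam →
      lam = 1 ∨ lam ^ m ≠ 1) :
    Function.Bijective (∑ j ∈ Finset.range m, A ^ j : Cn n →L[ℂ] Cn n) := by
  set p : ℂ[X] := ∑ j ∈ Finset.range m, X ^ j with hp
  set L : Module.End ℂ (Cn n) := A.toLinearMap with hL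
  have h1 : (∑ j ∈ Finset.range m, A ^ j : Cn n →L[ℂ] Cn n).toLinearMap = aeval L p := by
    simp [hp, hL]
  have h2 : IsUnit (aeval L p) := by
    by_contra hnu
    have h3 : (0 : ℂ) ∈ spectrum ℂ (aeval L p) := spectrum.zero_mem_iff ℂ |>.2 hnu
    have hdeg : 0 < degree p := by
      have hc : p.coeff 1 ≠ 0 := by
        simp [hp, coeff_X_pow, hm]
      exact lt_of_lt_of_le (by norm_num) (le_degree_of_ne_zero hc)
    rw [spectrum.map_polynomial_aeval_of_degree_pos L p hdeg] at h3
    obtain ⟨lam, hlam, hlam0⟩ := h3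
    have hl := heig lam (Module.End.hasEigenvalue_iff_mem_spectrum.2 hlam)
    have h4 : ∑ j ∈ Finset.range m, lam ^ j = 0 := by simpa [hp, eval_finsetSum] using hlam0
    rcases hl with rfl | hl
    · simp at h4; omega
    · apply hl
      have := geom_sum_mul lam m
      rw [h4, zero_mul] at this
      exact (sub_eq_zero.1 this.symm)
  have h5 := (Module.End.isUnit_iff _).1 h2
  rw [← h1] at h5
  exact h5

theorem iterate_isLittleO {n : ℕ} (m : ℕ) (f : Cn n → Cn n) (hf : IsGerm f) :
    (fun x => (x - f^[m] x) -
      (∑ j ∈ Finset.range m, (fderiv ℂ f 0) ^ j : Cn n →L[ℂ] Cn n) (x - f x))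
      =o[𝓝 0] fun x => x - f x := by
  have hs : HasStrictFDerivAt f (fderiv ℂ f 0) 0 := hf.1.hasStrictFDerivAt
  have h1 : ∀ j ∈ Finset.range m, (fun x => f^[j] x - f^[j] (f x) - (fderiv ℂ f 0 ^ j) (x - f x))
      =o[𝓝 0] fun x => x - f x := by
    intro j _
    have h2 := (hs.iterate hf.2 j).isLittleO
    have ht : Tendsto (fun x => (x, f x)) (𝓝 (0 : Cn n)) (𝓝 ((0 : Cn n), (0 : Cn n))) := by
      have := (continuousAt_id (x := (0 : Cn n))).prodMk hf.1.continuousAt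
      simpa [ContinuousAt, hf.2] using this
    exact h2.comp_tendsto ht
  have h3 := IsLittleO.sum h1
  refine h3.congr_left fun x => ?_
  rw [Finset.sum_apply, Finset.sum_sub_distrib]
  congr 1
  · exact Finset.sum_range_sub' (fun j => f^[j] x) m
  · simp

/-- Shub–Sullivan: if `0` is an isolated fixed point of `f` and every eigenvalue `λ` of
`Df(0)` satisfies `λ = 1` or `λ^m ≠ 1`, then `0` is an isolated fixed point of `f^m`
and `μ_f(0) = μ_{f^m}(0)`. -/
theorem index_eq_index_iterate_of_eigenvalues (m : ℕ) (hm : 1 < m)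
    (f : Cn 2 → Cn 2) (hf : IsGerm f)
    (hiso : IsolatedFixedPtAt0 f)
    (heig : ∀ lam : ℂ, Module.End.HasEigenvalue ((fderiv ℂ f 0).toLinearMap) lam →
      lam = 1 ∨ lam ^ m ≠ 1) :
    IsolatedFixedPtAt0 (f^[m]) ∧ fixedPointIndex f 0 = fixedPointIndex (f^[m]) 0 := by
  have hbij := geom_sum_bijective hm (fderiv ℂ f 0) heig
  obtain ⟨B, hB⟩ := isInvertible_iff_bijective.2 hbij
  have ho := iterate_isLittleO m f hf
  rw [← hB] at ho
  simp only [ContinuousLinearEquiv.coe_coe] at ho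
  have hfm : ∀ j, AnalyticAt ℂ (f^[j]) 0 ∧ f^[j] 0 = 0 := by
    intro j
    induction j with
    | zero => exact ⟨analyticAt_id, rfl⟩
    | succ j ih =>
      rw [Function.iterate_succ']
      refine ⟨AnalyticAt.comp (by rw [ih.2]; exact hf.1) ih.1, by simp [ih.2, hf.2]⟩
  have hO1 : (fun x => x - f x) =O[𝓝 0] fun x => B (x - f x) := by
    have := (B.symm : Cn 2 →L[ℂ] Cn 2).isBigO_comp (fun x => B (x - f x)) (𝓝 0)
    simpa using this
  have hO : (fun x => x - f x) =O[𝓝 0] fun x => x - f^[m] x := by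
    have h1 := (ho.trans_isBigO hO1).right_isBigO_add
    simp only [sub_add_cancel] at h1
    exact hO1.trans h1
  have ho' : (fun x => (x - f x) - B.symm (x - f^[m] x)) =o[𝓝 0] fun x => x - f^[m] x := by
    have h1 := (ho.trans_isBigO hO)
    have h2 := ((B.symm : Cn 2 →L[ℂ] Cn 2).isBigO_comp
      (fun x => x - f^[m] x - B (x - f x)) (𝓝 0)).trans_isLittleO h1
    refine h2.neg_left.congr_left fun x => ?_
    simp [map_sub]
  constructor
  · refine ⟨(hfm m).2, ?_⟩
    obtain ⟨c, hc⟩ := hO.bound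
    filter_upwards [hiso.2, hc.filter_mono nhdsWithin_le_nhds] with x hx hxc hfx
    rw [hfx, sub_self, norm_zero, mul_zero] at hxc
    exact hx (sub_eq_zero.1 (norm_le_zero_iff.1 hxc)).symm
  · unfold fixedPointIndex zeroOrder
    congr 1
    ext k
    exact ⟨fun H => H.transfer B (analyticAt_id.sub (hfm m).1) ho,
      fun H => H.transfer B.symm (analyticAt_id.sub hf.1) ho'⟩

end ZhangPaper
end
end
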